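/- arXiv:1411.4058 — 5 statements merged into one kernel-verified Lean document; each statement's English description precedes it below -/
import Mathlib

section
/- For integers k > ℓ ≥ 1, with i = i(k,ℓ), and positive integers e_1,...,e_t, the ordered Ramsey number satisfies OR(P_{e_1}^{k,ℓ},...,P_{e_t}^{k,ℓ}) = (k−ℓ)·OR(P_{e_1}^{i,i−1},...,P_{e_t}^{i,i−1}) + ℓ − (k−ℓ)(i−1). -/
/-- An ordered hypergraph with vertex set `{1, …, n}` (with its natural order)
and edges given as finite sets of vertices. -/
structure OrderedHypergraph where
  n : ℕ
  edges : Finset (Finset ℕ)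

/-- An ordered hypergraph `G` is contained in an ordered hypergraph `H` if there is an
injective, order-preserving map from the vertices of `G` to the vertices of `H` such that
edges of `G` map to edges of `H`. -/
def OrderedHypergraph.Contains (H G : OrderedHypergraph) : Prop :=
  ∃ f : ℕ → ℕ, StrictMono f ∧ (∀ v ∈ Finset.Icc 1 G.n, f v ∈ Finset.Icc 1 H.n) ∧
    ∀ A ∈ G.edges, A.image f ∈ H.edges

/-- The complete `k`-uniform ordered hypergraph `K_N^k` on the vertex set `{1, …, N}`. -/
def completeHG (k N : ℕ) : OrderedHypergraph :=
  ⟨N, Finset.powersetCard k (Finset.Icc 1 N)⟩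

/-- The `i`-colored subgraph of `K_N^k` under the coloring `c`. -/
def coloredSubgraph (k N : ℕ) {t : ℕ} (c : Finset ℕ → Fin t) (i : Fin t) : OrderedHypergraph :=
  ⟨N, (Finset.powersetCard k (Finset.Icc 1 N)).filter fun A => c A = i⟩

/-- The ordered Ramsey number `OR(G 0, …, G (t-1))` of `k`-uniform ordered hypergraphs:
the minimum `N` such that every `t`-coloring of the edges of `K_N^k` contains, for some
color `i`, a copy of `G i` in the `i`-colored subgraph. -/
noncomputable def ORnum (k : ℕ) {t : ℕ} (G : Fin t → OrderedHypergraph) : ℕ :=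
  sInf {N | ∀ c : Finset ℕ → Fin t, ∃ i, (coloredSubgraph k N c i).Contains (G i)}

/-- The `(k,ℓ)`-path `P_e^{k,ℓ}` with `e` edges: the ordered `k`-uniform hypergraph on
vertex set `{1, …, e(k-ℓ)+ℓ}` with edges `A_r = {(r-1)(k-ℓ)+1, …, (r-1)(k-ℓ)+k}`. -/
def loosePath (k l e : ℕ) : OrderedHypergraph :=
  ⟨e * (k - l) + l,
    (Finset.range e).image fun r => Finset.Icc (r * (k - l) + 1) (r * (k - l) + k)⟩


/-- A strictly increasing enumeration is determined by its image. -/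
lemma enum_unique (k m : ℕ) (f g : ℕ → ℕ) (hf : StrictMono f) (hg : StrictMono g)
    (h : (Finset.Icc (m + 1) (m + k)).image g = (Finset.Icc 1 k).image f) :
    ∀ u ∈ Finset.Icc 1 k, g (m + u) = f u := by
  have hc : ((Finset.Icc 1 k).image f).card = k := by
    rw [Finset.card_image_of_injective _ hf.injective]; simp
  have h1 := Finset.orderEmbOfFin_unique hc (f := fun x : Fin k => f (x + 1))
    (fun x => Finset.mem_image_of_mem _ (by simp))
    (fun x y hxy => hf (by have : (x : ℕ) < y := hxy
                           omega))
  have h2 := Finset.orderEmbOfFin_unique hc (f := fun x : Fin k => g (m + (x + 1)))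
    (fun x => by rw [← h]; exact Finset.mem_image_of_mem _ (by simp))
    (fun x y hxy => hg (by have : (x : ℕ) < y := hxy
                           omega))
  intro u hu
  rw [Finset.mem_Icc] at hu
  have h3 := congrFun (h2.trans h1.symm) ⟨u - 1, by omega⟩
  have h4 : u - 1 + 1 = u := by omega
  simpa [h4] using h3

/-- Two-edge statement for tight paths. -/
def TwoEdge (k : ℕ) : Prop :=
  ∀ (C : Type) [Fintype C], ∃ N : ℕ, ∀ c : Finset ℕ → C, ∃ f : ℕ → ℕ, StrictMono f ∧
    f (k + 1) ≤ N ∧ c ((Finset.Icc 1 k).image f) = c ((Finset.Icc 2 (k + 1)).image f)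

/-- All-length statement for tight paths. -/
def ManyEdge (k : ℕ) : Prop :=
  ∀ (e : ℕ) (C : Type) [Fintype C], ∃ N : ℕ, ∀ c : Finset ℕ → C, ∃ f : ℕ → ℕ, ∃ j,
    StrictMono f ∧ f (e + k) ≤ N ∧ ∀ r < e, c ((Finset.Icc (r + 1) (r + k + 1)).image f) = j

lemma twoEdge_one : TwoEdge 1 := by
  intro C _
  refine ⟨Fintype.card C + 1, fun c => ?_⟩
  obtain ⟨x, y, hxy, h⟩ := Fintype.exists_ne_map_eq_of_card_lt
    (fun x : Fin (Fintype.card C + 1) => c {(x : ℕ) + 1}) (by simp)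
  wlog hlt : x < y generalizing x y
  · exact this y x hxy.symm h.symm (lt_of_le_of_ne (not_lt.mp hlt) hxy.symm)
  have hlt' : (x : ℕ) < y := hlt
  refine ⟨fun m => if m = 0 then 0 else if m = 1 then x + 1 else y + 1 + (m - 2), ?_, ?_, ?_⟩
  · apply strictMono_nat_of_lt_succ
    intro n
    rcases n with _ | _ | n
    · simp
    · simp; omega
    · simp
  · have := y.2
    simp; omega
  · simpa using h

lemma many_of_two (k : ℕ) (hk : 1 ≤ k) (h : TwoEdge k) : ManyEdge k := by
  classical
  intro e C _
  obtain ⟨N, hN⟩ := h (C → Fin (e + 1))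
  refine ⟨N, fun c => ?_⟩
  let P : Finset ℕ → C → ℕ → Prop := fun S j m => ∃ g : ℕ → ℕ, StrictMono g ∧
    (Finset.Icc (m + 1) (m + k)).image g = S ∧
      ∀ r < m, c ((Finset.Icc (r + 1) (r + k + 1)).image g) = j
  obtain ⟨f, hf, hfN, hc⟩ := hN fun S j =>
    ⟨Nat.findGreatest (P S j) e, Nat.lt_succ_of_le (Nat.findGreatest_le e)⟩
  set j := c ((Finset.Icc 1 (k + 1)).image f) with hj
  have hL := congrArg Fin.val (congrFun hc j)
  dsimp only at hL
  set S := (Finset.Icc 1 k).image f with hS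
  set m := Nat.findGreatest (P S j) e with hm
  have hP : P S j m := by
    apply Nat.findGreatest_spec (P := P S j) (Nat.zero_le e)
    exact ⟨f, hf, by simp [hS], by simp⟩
  have hme : m ≤ e := Nat.findGreatest_le e
  obtain ⟨g, hg, hgS, hgc⟩ := hP
  have hu := enum_unique k m f g hf hg hgS
  rcases hme.lt_or_eq with hlt | heq
  · exfalso
    have : P ((Finset.Icc 2 (k + 1)).image f) j (m + 1) := by
      let h : ℕ → ℕ := fun v => if v ≤ m then g v else f (v - m)
      have e1 : ∀ v, m < v → h v = f (v - m) := by
        intro v hv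
        simp only [h]; rw [if_neg (by omega)]
      have e2 : ∀ v, v ≤ m + k → h v = g v := by
        intro v hv
        by_cases hvm : v ≤ m
        · simp [h, hvm]
        · have := hu (v - m) (by rw [Finset.mem_Icc]; omega)
          rw [show m + (v - m) = v by omega] at this
          simp [h, hvm, this]
      have e3 : ∀ a b, m < m + a → (Finset.Icc (m + a) (m + b)).image h = (Finset.Icc a b).image f := by
        intro a b hab
        ext x
        rw [Finset.mem_image, Finset.mem_image]
        constructor
        · rintro ⟨v, hv, rfl⟩
          rw [Finset.mem_Icc] at hv
          exact ⟨v - m, by rw [Finset.mem_Icc]; omega, (e1 v (by omega)).symm⟩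
        · rintro ⟨v, hv, rfl⟩
          rw [Finset.mem_Icc] at hv
          refine ⟨m + v, by rw [Finset.mem_Icc]; omega, ?_⟩
          rw [e1 _ (by omega)]
          congr 1
          omega
      refine ⟨h, ?_, ?_, ?_⟩
      · apply strictMono_nat_of_lt_succ
        intro n
        by_cases hn : n + 1 ≤ m + k
        · rw [e2 _ hn, e2 _ (by omega)]
          exact hg (by omega)
        · rw [e1 _ (by omega), e1 _ (by omega)]
          exact hf (by omega)
      · have := e3 2 (k + 1) (by omega)
        rw [← this]
        congr 2; omega
      · intro r hr
        by_cases hrm : r < m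
        · rw [← hgc r hrm]
          congr 1
          apply Finset.image_congr
          intro v hv
          simp only [Finset.coe_Icc, Set.mem_Icc] at hv
          exact e2 v (by omega)
        · obtain rfl : r = m := by omega
          rw [hj]
          exact congrArg c (e3 1 (k + 1) (by omega))
    have h2 := Nat.le_findGreatest (P := P ((Finset.Icc 2 (k + 1)).image f) j)
      (Nat.succ_le_of_lt hlt) this
    omega
  · refine ⟨g, j, hg, ?_, ?_⟩
    · rw [← heq, hu k (by rw [Finset.mem_Icc]; omega)]
      exact (hf.monotone (by omega)).trans hfN
    · rw [← heq]; exact hgc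

lemma two_of_many (k : ℕ) (h : ManyEdge k) : TwoEdge (k + 1) := by
  intro C _
  obtain ⟨N, hN⟩ := h 2 C
  refine ⟨N, fun c => ?_⟩
  obtain ⟨f, j, hf, hfN, hc⟩ := hN c
  refine ⟨f, hf, by convert hfN using 2; omega, ?_⟩
  have h0 := hc 0 (by omega)
  have h1 := hc 1 (by omega)
  rw [show 0 + 1 = 1 by rfl, show 0 + k + 1 = k + 1 by omega] at h0
  rw [show 1 + 1 = 2 by rfl, show 1 + k + 1 = k + 1 + 1 by omega] at h1
  rw [h0, h1]

lemma twoEdge_all (k : ℕ) (hk : 1 ≤ k) : TwoEdge k := by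
  induction k, hk using Nat.le_induction with
  | base => exact twoEdge_one
  | succ k hk ih => exact two_of_many k (many_of_two k hk ih)

/-- Explicit form of containing a loose path. -/
lemma contains_iff (k l e N t : ℕ) (c : Finset ℕ → Fin t) (j : Fin t) (he : 1 ≤ e)
    (hlk : l < k) :
    (coloredSubgraph k N c j).Contains (loosePath k l e) ↔
      ∃ f : ℕ → ℕ, StrictMono f ∧ f (e * (k - l) + l) ≤ N ∧
        ∀ r < e, c ((Finset.Icc (r * (k - l) + 1) (r * (k - l) + k)).image f) = j := by
  have hpos : 1 ≤ e * (k - l) := Nat.mul_pos he (by omega)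
  constructor
  · rintro ⟨f, hf, hv, hA⟩
    refine ⟨f, hf, ?_, ?_⟩
    · have := hv (e * (k - l) + l) (by simp [loosePath]; omega)
      simp only [coloredSubgraph, Finset.mem_Icc] at this
      exact this.2
    · intro r hr
      have := hA _ (Finset.mem_image_of_mem _ (Finset.mem_range.mpr hr))
      simp only [coloredSubgraph, Finset.mem_filter] at this
      exact this.2
  · rintro ⟨f, hf, hN, hc⟩
    have hv : ∀ v, 1 ≤ v → v ≤ e * (k - l) + l → f v ∈ Finset.Icc 1 N := by
      intro v h1 h2
      rw [Finset.mem_Icc]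
      exact ⟨h1.trans (hf.id_le v), (hf.monotone h2).trans hN⟩
    refine ⟨f, hf, ?_, ?_⟩
    · intro v h
      simp only [loosePath, Finset.mem_Icc] at h
      exact hv v h.1 h.2
    · intro A hA
      simp only [loosePath, Finset.mem_image, Finset.mem_range] at hA
      obtain ⟨r, hr, rfl⟩ := hA
      simp only [coloredSubgraph, Finset.mem_filter, Finset.mem_powersetCard]
      refine ⟨⟨?_, ?_⟩, hc r hr⟩
      · intro x hx
        rw [Finset.mem_image] at hx
        obtain ⟨v, hvv, rfl⟩ := hx
        rw [Finset.mem_Icc] at hvv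
        apply hv v (by omega)
        have h3 : (r + 1) * (k - l) ≤ e * (k - l) := Nat.mul_le_mul_right _ hr
        rw [add_mul] at h3
        omega
      · rw [Finset.card_image_of_injective _ hf.injective]; simp

/-- The set of `N` good for loose paths. -/
def GoodSet (k l : ℕ) {t : ℕ} (e : Fin t → ℕ) : Set ℕ :=
  {N | ∀ c : Finset ℕ → Fin t, ∃ j, ∃ f : ℕ → ℕ, StrictMono f ∧ f (e j * (k - l) + l) ≤ N ∧
        ∀ r < e j, c ((Finset.Icc (r * (k - l) + 1) (r * (k - l) + k)).image f) = j}

lemma ORnum_eq (k l : ℕ) {t : ℕ} (e : Fin t → ℕ) (he : ∀ j, 1 ≤ e j) (hlk : l < k) :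
    ORnum k (fun j => loosePath k l (e j)) = sInf (GoodSet k l e) := by
  unfold ORnum GoodSet
  congr 1
  ext N
  simp only [Set.mem_setOf_eq]
  apply forall_congr'
  intro c
  apply exists_congr
  intro j
  exact contains_iff k l (e j) N t c j (he j) hlk

lemma tight_nonempty (i : ℕ) (hi : 2 ≤ i) {t : ℕ} (e : Fin t → ℕ) :
    (GoodSet i (i - 1) e).Nonempty := by
  obtain ⟨N, hN⟩ := many_of_two (i - 1) (by omega) (twoEdge_all _ (by omega))
    (Finset.univ.sup e) (Fin t)
  refine ⟨N, fun c => ?_⟩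
  obtain ⟨f, j, hf, hfN, hc⟩ := hN c
  have hle : e j ≤ Finset.univ.sup e := Finset.le_sup (Finset.mem_univ j)
  have h1 : i - (i - 1) = 1 := by omega
  refine ⟨j, f, hf, ?_, ?_⟩
  · rw [h1]
    exact (hf.monotone (by omega)).trans hfN
  · intro r hr
    rw [h1, ← hc r (by omega)]
    congr 3 <;> omega

/-- Upper bound: blow up vertices to blocks of size `d`. -/
lemma good_up (k l i d s : ℕ) {t : ℕ} (e : Fin t → ℕ) (he : ∀ j, 1 ≤ e j)
    (hi : 2 ≤ i) (hd : k = l + d) (hs : k + s = i * d) (hsd : s < d) (M : ℕ)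
    (hM : M ∈ GoodSet i (i - 1) e) : d * M - s ∈ GoodSet k l e := by
  intro c
  obtain ⟨j, g, hg, hgM, hc⟩ := hM fun S =>
    c ((S.biUnion fun a => (Finset.Icc 1 d).image fun u => (a - 1) * d + u).filter
      fun x => x + s ≤ d * S.sup id)
  have h1 : i - (i - 1) = 1 := by omega
  have h2 : k - l = d := by omega
  have hid : i * d = (i - 1) * d + d := by
    obtain ⟨i', rfl⟩ : ∃ i', i = i' + 1 := ⟨i - 1, by omega⟩
    simp [add_mul]
  rw [h1] at hgM
  have hg1 : ∀ m, 1 ≤ m → 1 ≤ g m := fun m hm => hm.trans (hg.id_le m)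
  have hdpos : 0 < d := by omega
  -- the blown up enumeration
  set F : ℕ → ℕ := fun v => if v = 0 then 0 else
    (g ((v - 1) / d + 1) - 1) * d + ((v - 1) % d + 1) with hF
  have hFv : ∀ q u, 1 ≤ u → u ≤ d → F (q * d + u) = (g (q + 1) - 1) * d + u := by
    intro q u hu1 hu2
    have a1 : q * d + u - 1 = (u - 1) + d * q := by rw [mul_comm]; omega
    have a2 : (q * d + u - 1) / d = q := by
      rw [a1, Nat.add_mul_div_left _ _ hdpos, Nat.div_eq_of_lt (by omega)]; omega
    have a3 : (q * d + u - 1) % d = u - 1 := by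
      rw [a1, Nat.add_mul_mod_self_left, Nat.mod_eq_of_lt (by omega)]
    have a4 : q * d + u ≠ 0 := by omega
    simp only [hF, a4, if_false, a2, a3]
    omega
  have hdec : ∀ v, 1 ≤ v → ∃ q u, 1 ≤ u ∧ u ≤ d ∧ v = q * d + u := by
    intro v hv
    refine ⟨(v - 1) / d, (v - 1) % d + 1, by omega, Nat.mod_lt _ hdpos, ?_⟩
    have := Nat.div_add_mod (v - 1) d
    rw [mul_comm] at this
    omega
  have hmulg : ∀ q, (g (q + 1) - 1) * d + d = d * g (q + 1) := by
    intro q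
    have := hg1 (q + 1) (by omega)
    obtain ⟨x, hx⟩ : ∃ x, g (q + 1) = x + 1 := ⟨g (q + 1) - 1, by omega⟩
    rw [hx, Nat.add_sub_cancel]; ring
  have hFmono : StrictMono F := by
    apply strictMono_nat_of_lt_succ
    intro n
    rcases Nat.eq_zero_or_pos n with rfl | hn
    · simp [hF]
    · obtain ⟨q, u, hu1, hu2, rfl⟩ := hdec n hn
      rw [hFv q u hu1 hu2]
      rcases hu2.lt_or_eq with hlt | rfl
      · rw [add_assoc, hFv q (u + 1) (by omega) (by omega)]
        omega
      · have : q * u + u + 1 = (q + 1) * u + 1 := by ring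
        rw [this, hFv (q + 1) 1 le_rfl (by omega), hmulg]
        have h5 : g (q + 1) ≤ g (q + 1 + 1) - 1 := by
          have := hg (show q + 1 < q + 1 + 1 by omega)
          omega
        have := Nat.mul_le_mul_left u h5
        rw [mul_comm _ u]
        omega
  refine ⟨j, F, hFmono, ?_, ?_⟩
  · rw [h2]
    have hej := he j
    have e1 : e j * d + l = (e j + (i - 2)) * d + (d - s) := by
      obtain ⟨i', rfl⟩ : ∃ i', i = i' + 2 := ⟨i - 2, by omega⟩
      simp only [Nat.add_sub_cancel, add_mul] at *
      omega
    rw [e1, hFv _ _ (by omega) (by omega)]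
    have := hmulg (e j + (i - 2))
    rw [show e j + (i - 2) + 1 = e j * 1 + (i - 1) by omega] at this ⊢
    have := Nat.mul_le_mul_left d hgM
    omega
  · intro r hr
    rw [h2, ← hc r hr, h1, mul_one]
    congr 1
    have hsup : ((Finset.Icc (r + 1) (r + i)).image g).sup id = g (r + i) := by
      apply le_antisymm
      · apply Finset.sup_le
        intro x hx
        rw [Finset.mem_image] at hx
        obtain ⟨v, hv, rfl⟩ := hx
        rw [Finset.mem_Icc] at hv
        exact hg.monotone hv.2
      · exact Finset.le_sup (f := id)
          (Finset.mem_image_of_mem g (by rw [Finset.mem_Icc]; omega))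
    rw [hsup]
    have hlast : F (r * d + k) + s = d * g (r + i) := by
      have e1 : r * d + k = (r + (i - 1)) * d + (d - s) := by rw [add_mul]; omega
      rw [e1, hFv _ _ (by omega) (by omega)]
      have := hmulg (r + (i - 1))
      rw [show r + (i - 1) + 1 = r + i by omega] at this ⊢
      omega
    ext x
    simp only [Finset.mem_filter, Finset.mem_biUnion, Finset.mem_image, Finset.mem_Icc]
    constructor
    · rintro ⟨v, ⟨hv1, hv2⟩, rfl⟩
      obtain ⟨q, u, hu1, hu2, rfl⟩ := hdec v (by omega)
      have hq1 : r ≤ q := by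
        by_contra hcon
        have := Nat.mul_le_mul_right d (show q + 1 ≤ r by omega)
        rw [add_mul] at this
        omega
      have hq2 : q + 1 ≤ r + i := by
        by_contra hcon
        have := Nat.mul_le_mul_right d (show r + i ≤ q by omega)
        rw [add_mul] at this
        omega
      refine ⟨⟨g (q + 1), ⟨q + 1, by omega, rfl⟩, u, ⟨hu1, hu2⟩, (hFv q u hu1 hu2).symm⟩, ?_⟩
      have := hFmono.monotone hv2
      omega
    · rintro ⟨⟨a, ⟨m, hm, rfl⟩, u, hu, rfl⟩, hx⟩
      obtain ⟨q, rfl⟩ : ∃ q, m = q + 1 := ⟨m - 1, by omega⟩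
      refine ⟨q * d + u, ⟨?_, ?_⟩, hFv q u hu.1 hu.2⟩
      · have := Nat.mul_le_mul_right d (show r ≤ q by omega)
        omega
      · rw [← hFmono.le_iff_le, hFv q u hu.1 hu.2]
        omega

/-- Lower bound: project to every `d`-th vertex. -/
lemma good_down (k l i d s : ℕ) {t : ℕ} (e : Fin t → ℕ) (he : ∀ j, 1 ≤ e j)
    (hi : 2 ≤ i) (hd : k = l + d) (hs : k + s = i * d) (hsd : s < d) (N : ℕ)
    (hN : N ∈ GoodSet k l e) : (N + s) / d ∈ GoodSet i (i - 1) e := by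
  intro c
  obtain ⟨j, f, hf, hfN, hc⟩ := hN fun B =>
    c ((B.filter fun b => d ∣ (B.filter fun x => x ≤ b).card + s).image fun b => (b + s) / d)
  have h1 : i - (i - 1) = 1 := by omega
  have h2 : k - l = d := by omega
  have hdpos : 0 < d := by omega
  rw [h2] at hfN
  set g : ℕ → ℕ := fun m => if m = 0 then 0 else (f (m * d - s) + s) / d with hgdef
  have hgm : ∀ m, m ≠ 0 → g m = (f (m * d - s) + s) / d := by
    intro m hm; simp [hgdef, hm]
  have hge : ∀ a b, f a + b ≤ f (a + b) := by
    intro a b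
    induction b with
    | zero => simp
    | succ b ih =>
      have := hf (show a + b < a + (b + 1) by omega)
      omega
  have hgmono : StrictMono g := by
    apply strictMono_nat_of_lt_succ
    intro n
    rcases Nat.eq_zero_or_pos n with rfl | hn
    · have := hf.id_le (d - s)
      simp only [id] at this
      rw [hgm 1 (by omega), one_mul]
      simp only [hgdef, if_true]
      exact Nat.div_pos (by omega) hdpos
    · rw [hgm _ (by omega), hgm _ (by omega)]
      have h3 : d ≤ n * d := Nat.le_mul_of_pos_left d hn
      have h4 : (n + 1) * d - s = (n * d - s) + d := by rw [add_mul]; omega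
      have h5 := hge (n * d - s) d
      rw [h4]
      calc (f (n * d - s) + s) / d < (f (n * d - s) + s + d) / d := by
            rw [Nat.add_div_right _ hdpos]; omega
        _ ≤ _ := Nat.div_le_div_right (by omega)
  refine ⟨j, g, hgmono, ?_, ?_⟩
  · rw [h1, mul_one, hgm _ (by omega)]
    have e1 : (e j + (i - 1)) * d - s = e j * d + l := by
      obtain ⟨i', rfl⟩ : ∃ i', i = i' + 1 := ⟨i - 1, by omega⟩
      simp only [Nat.add_sub_cancel, add_mul] at *
      omega
    rw [e1]
    exact Nat.div_le_div_right (by omega)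
  · intro r hr
    rw [h1, mul_one, ← hc r hr, h2]
    congr 1
    have hcard : ∀ v, r * d + 1 ≤ v → v ≤ r * d + k →
        (((Finset.Icc (r * d + 1) (r * d + k)).image f).filter fun x => x ≤ f v).card
          = v - r * d := by
      intro v hv1 hv2
      have : ((Finset.Icc (r * d + 1) (r * d + k)).image f).filter (fun x => x ≤ f v)
          = (Finset.Icc (r * d + 1) v).image f := by
        ext x
        simp only [Finset.mem_filter, Finset.mem_image, Finset.mem_Icc]
        constructor
        · rintro ⟨⟨w, hw, rfl⟩, hle⟩
          exact ⟨w, ⟨hw.1, hf.le_iff_le.mp hle⟩, rfl⟩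
        · rintro ⟨w, hw, rfl⟩
          exact ⟨⟨w, by omega, rfl⟩, hf.monotone hw.2⟩
      rw [this, Finset.card_image_of_injective _ hf.injective, Nat.card_Icc]
      omega
    ext x
    simp only [Finset.mem_image, Finset.mem_Icc, Finset.mem_filter]
    constructor
    · rintro ⟨m, ⟨hm1, hm2⟩, rfl⟩
      rw [hgm m (by omega)]
      have b1 := Nat.mul_le_mul_right d hm1
      have b2 := Nat.mul_le_mul_right d hm2
      rw [add_mul] at b1 b2
      refine ⟨f (m * d - s), ⟨⟨m * d - s, by omega, rfl⟩, ?_⟩, rfl⟩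
      rw [hcard _ (by omega) (by omega)]
      refine ⟨m - r, ?_⟩
      rw [Nat.mul_sub, mul_comm d m, mul_comm d r]
      omega
    · rintro ⟨b, ⟨⟨v, hv, rfl⟩, hdvd⟩, rfl⟩
      rw [hcard v hv.1 hv.2] at hdvd
      obtain ⟨q, hq⟩ := hdvd
      have hq0 : q ≠ 0 := by
        rintro rfl
        omega
      have hqi : q ≤ i := by
        by_contra hcon
        have := Nat.mul_le_mul_left d (show i + 1 ≤ q by omega)
        rw [mul_add, mul_comm d i] at this
        omega
      refine ⟨r + q, by omega, ?_⟩
      rw [hgm _ (by omega)]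
      have : (r + q) * d - s = v := by
        rw [add_mul, mul_comm q d]
        omega
      rw [this]

/-- For `k > ℓ ≥ 1`, with `i = i(k,ℓ)` the intersection number
(the unique integer `i ≥ 2` with `(i-2)/(i-1) < ℓ/k ≤ (i-1)/i`, expressed here by
cross-multiplication), and positive integers `e 0, …, e (t-1)`,
`OR(P_{e_1}^{k,ℓ}, …, P_{e_t}^{k,ℓ}) = (k-ℓ)·OR(P_{e_1}^{i,i-1}, …, P_{e_t}^{i,i-1}) + ℓ - (k-ℓ)(i-1)`. -/
theorem ordered_ramsey_loose_paths (k l i t : ℕ) (e : Fin t → ℕ)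
    (ht : 1 ≤ t) (hl : 1 ≤ l) (hlk : l < k) (he : ∀ j, 1 ≤ e j)
    (hi2 : 2 ≤ i) (hi_lower : (i - 2) * k < (i - 1) * l) (hi_upper : i * l ≤ (i - 1) * k) :
    (ORnum k (fun j => loosePath k l (e j)) : ℤ) =
      ((k : ℤ) - l) * (ORnum i (fun j => loosePath i (i - 1) (e j)) : ℤ)
        + l - ((k : ℤ) - l) * ((i : ℤ) - 1) := by
  rw [ORnum_eq k l e he hlk, ORnum_eq i (i - 1) e he (by omega)]
  obtain ⟨d, rfl⟩ : ∃ d, k = l + d := ⟨k - l, by omega⟩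
  obtain ⟨i', rfl⟩ : ∃ i', i = i' + 2 := ⟨i - 2, by omega⟩
  have hle : l + d ≤ (i' + 2) * d := by
    simp only [show i' + 2 - 1 = i' + 1 by omega] at hi_upper
    nlinarith
  have hlt : (i' + 2) * d < l + d + d := by
    simp only [show i' + 2 - 1 = i' + 1 by omega, Nat.add_sub_cancel] at hi_lower
    nlinarith
  obtain ⟨s, hs⟩ := Nat.exists_eq_add_of_le hle
  have hsd : s < d := by omega
  obtain ⟨M0, hM0⟩ := tight_nonempty (i' + 2) hi2 e
  have hup : ∀ M ∈ GoodSet (i' + 2) (i' + 2 - 1) e, d * M - s ∈ GoodSet (l + d) l e :=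
    fun M hM => good_up (l + d) l (i' + 2) d s e he hi2 rfl hs.symm hsd M hM
  have hdown : ∀ N ∈ GoodSet (l + d) l e, (N + s) / d ∈ GoodSet (i' + 2) (i' + 2 - 1) e :=
    fun N hN => good_down (l + d) l (i' + 2) d s e he hi2 rfl hs.symm hsd N hN
  set M := sInf (GoodSet (i' + 2) (i' + 2 - 1) e) with hMdef
  set N := sInf (GoodSet (l + d) l e) with hNdef
  have hM : M ∈ GoodSet (i' + 2) (i' + 2 - 1) e := Nat.sInf_mem ⟨M0, hM0⟩
  have hN : N ∈ GoodSet (l + d) l e := Nat.sInf_mem ⟨_, hup M0 hM0⟩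
  have h1 : N ≤ d * M - s := Nat.sInf_le (hup M hM)
  have h2 : M ≤ (N + s) / d := Nat.sInf_le (hdown N hN)
  have h3 : M * d ≤ N + s := (Nat.le_div_iff_mul_le (by omega)).mp h2
  have hM1 : 1 ≤ M := by
    obtain ⟨j, f, hf, hfM, -⟩ := hM fun _ => ⟨0, ht⟩
    have := hf.id_le (e j * (i' + 2 - (i' + 2 - 1)) + (i' + 2 - 1))
    simp only [id] at this
    omega
  have h4 : d ≤ d * M := Nat.le_mul_of_pos_right d hM1
  have h5 : N + s = d * M := by
    rw [mul_comm] at h3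
    omega
  have h5' : (N : ℤ) + s = d * M := by exact_mod_cast h5
  have hs' : ((i' : ℤ) + 2) * d = l + d + s := by exact_mod_cast hs
  push_cast
  linear_combination h5' + hs'
end

section
/- For integers k, ℓ with 0 < 2ℓ ≤ k and positive integers e_1,...,e_t, the ordered Ramsey number satisfies OR(P_{e_1}^{k,ℓ},...,P_{e_t}^{k,ℓ}) = (k−ℓ)·(e_1·e_2·...·e_t) + ℓ. -/
lemma exists_radix {t : ℕ} (e : Fin t → ℕ) : ∃ D : ℕ → Fin t → ℕ,
    (∀ u v, u < v → v < ∏ j, e j → ∃ i, D u i < D v i) ∧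
    ∀ u, u < ∏ j, e j → ∀ i, D u i < e i := by
  classical
  let g := Fintype.orderIsoFinOfCardEq (Lex (∀ i : Fin t, Fin (e i))) (k := ∏ j, e j)
    (by
      rw [← Fintype.card_congr (toLex (α := ∀ i : Fin t, Fin (e i)))]
      simp)
  refine ⟨fun u i => if h : u < ∏ j, e j then (ofLex (g ⟨u, h⟩) i).val else 0, ?_, ?_⟩
  · intro u v huv hv
    have hu : u < ∏ j, e j := huv.trans hv
    have h : g ⟨u, hu⟩ < g ⟨v, hv⟩ := g.strictMono (by simpa using huv)
    obtain ⟨i, -, hi⟩ := h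
    refine ⟨i, ?_⟩
    simp only [hu, hv, dif_pos]
    exact hi
  · intro u hu i
    simp only [hu, dif_pos]
    exact Fin.is_lt _

def HasChain {t : ℕ} (col : ℕ → ℕ → Fin t) (i : Fin t) (n v : ℕ) : Prop :=
  ∃ p : ℕ → ℕ, StrictMono p ∧ p n = v ∧ ∀ r < n, col (p r) (p (r + 1)) = i

lemma HasChain.extend {t : ℕ} {col : ℕ → ℕ → Fin t} {i : Fin t} {n v w : ℕ}
    (h : HasChain col i n v) (hvw : v < w) (hc : col v w = i) : HasChain col i (n + 1) w := by
  obtain ⟨p, hp, hpn, hcol⟩ := h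
  refine ⟨fun r => if r ≤ n then p r else w + (r - n - 1), ?_, by simp, ?_⟩
  · apply strictMono_nat_of_lt_succ
    intro r
    have h1 : p r < p (r + 1) := hp (Nat.lt_succ_self r)
    rcases lt_trichotomy r n with h | h | h
    · simp only [h.le, Nat.succ_le_of_lt h, if_true]; exact h1
    · subst h; simp; omega
    · have : ¬ r ≤ n := by omega
      have : ¬ r + 1 ≤ n := by omega
      simp only [*, if_false]; omega
  · intro r hr
    rcases Nat.lt_succ_iff_lt_or_eq.mp hr with h | h
    · simp only [h.le, Nat.succ_le_of_lt h, if_true]; exact hcol r h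
    · subst h; simp [hpn, hc]

lemma exists_chain {t : ℕ} (e : Fin t → ℕ) (col : ℕ → ℕ → Fin t) :
    ∃ i v, v ≤ ∏ j, e j ∧ HasChain col i (e i) v := by
  classical
  by_contra! hno
  have h0 : ∀ i v, HasChain col i 0 v := fun i v =>
    ⟨fun r => v + r, fun a b h => by simpa using h, by simp, by simp⟩
  let L : ℕ → Fin t → ℕ := fun v i => Nat.findGreatest (fun n => HasChain col i n v) (e i)
  have hL : ∀ v i, HasChain col i (L v i) v := fun v i =>
    Nat.findGreatest_spec (P := fun n => HasChain col i n v) (Nat.zero_le _) (h0 i v)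
  have hLlt : ∀ v, v ≤ ∏ j, e j → ∀ i, L v i < e i := by
    intro v hv i
    refine lt_of_le_of_ne (Nat.findGreatest_le _) ?_
    intro h
    have := hL v i
    rw [h] at this
    exact hno i v hv this
  let F : Fin (∏ j, e j + 1) → ∀ i, Fin (e i) := fun v i => ⟨L v i, hLlt v (by omega) i⟩
  obtain ⟨a, b, hab, hF⟩ := Fintype.exists_ne_map_eq_of_card_lt F (by simp)
  have key : ∀ a b : Fin (∏ j, e j + 1), a < b → F a ≠ F b := by
    intro a b hlt hF
    have h1 := (hL a (col a b)).extend (w := b) hlt rfl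
    have h2 : L a (col a b) < e (col a b) := hLlt a (by omega) _
    have h3 : L a (col a b) + 1 ≤ L b (col a b) :=
      Nat.le_findGreatest (P := fun n => HasChain col (col a b) n b) h2 h1
    have h4 : L a (col a b) = L b (col a b) := congrArg Fin.val (congrFun hF (col a b))
    omega
  rcases lt_or_gt_of_ne hab with h | h
  · exact key a b h hF
  · exact key b a h hF.symm

lemma nth_image {f : ℕ → ℕ} (hf : StrictMono f) (a k s : ℕ) (hs : s < k) :
    Nat.nth (fun x => x ∈ (Finset.Icc (a + 1) (a + k)).image f) s = f (a + 1 + s) := by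
  classical
  have hm : f (a + 1 + s) ∈ (Finset.Icc (a + 1) (a + k)).image f :=
    Finset.mem_image_of_mem _ (by simp; omega)
  have hc : Nat.count (fun x => x ∈ (Finset.Icc (a + 1) (a + k)).image f) (f (a + 1 + s)) = s := by
    rw [Nat.count_eq_card_filter_range]
    have : (Finset.range (f (a + 1 + s))).filter
        (fun x => x ∈ (Finset.Icc (a + 1) (a + k)).image f)
        = (Finset.Ico (a + 1) (a + 1 + s)).image f := by
      ext x
      simp only [Finset.mem_filter, Finset.mem_range, Finset.mem_image, Finset.mem_Icc,
        Finset.mem_Ico]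
      constructor
      · rintro ⟨h1, y, hy, rfl⟩
        exact ⟨y, ⟨hy.1, hf.lt_iff_lt.mp h1⟩, rfl⟩
      · rintro ⟨y, hy, rfl⟩
        exact ⟨hf hy.2, y, ⟨hy.1, by omega⟩, rfl⟩
    rw [this, Finset.card_image_of_injective _ hf.injective]
    simp
  have := Nat.nth_count (p := fun x => x ∈ (Finset.Icc (a + 1) (a + k)).image f) hm
  rwa [hc] at this

lemma strictMono_add_le {f : ℕ → ℕ} (hf : StrictMono f) (x y : ℕ) : f x + y ≤ f (x + y) := by
  induction y with
  | zero => simp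
  | succ y ih =>
    have : f (x + y) < f (x + (y + 1)) := hf (by omega)
    omega

lemma lower_bound (M l t : ℕ) (e : Fin t → ℕ) (ht : 1 ≤ t) (hl : 1 ≤ l) (hM : 1 ≤ M) (n : ℕ)
    (hn : ∀ c : Finset ℕ → Fin t,
      ∃ i, (coloredSubgraph (M + l) n c i).Contains (loosePath (M + l) l (e i))) :
    M * (∏ j, e j) + l ≤ n := by
  classical
  by_contra! hlt
  obtain ⟨D, hD1, hD2⟩ := exists_radix e
  let B : ℕ → ℕ := fun x => (x - 1) / M
  let col : ℕ → ℕ → Fin t := fun u v =>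
    if h : ∃ i, D u i < D v i then h.choose else ⟨0, ht⟩
  have hcol : ∀ u v, u < v → v < ∏ j, e j → D u (col u v) < D v (col u v) := by
    intro u v h1 h2
    have h := hD1 u v h1 h2
    simp only [col, h, dif_pos]
    exact h.choose_spec
  obtain ⟨i, f, hf, hv, hA⟩ := hn fun A =>
    col (B (Nat.nth (fun x => x ∈ A) 0)) (B (Nat.nth (fun x => x ∈ A) M))
  simp only [loosePath, coloredSubgraph, Nat.add_sub_cancel] at hv hA
  have hb : ∀ r ≤ e i, 1 ≤ f (r * M + 1) ∧ f (r * M + 1) ≤ M * ∏ j, e j := by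
    intro r hr
    have h0 : r * M ≤ e i * M := Nat.mul_le_mul_right _ hr
    have h1 := hv (r * M + 1) (by simp; omega)
    have h2 := hv (r * M + l) (by simp; omega)
    have h3 := strictMono_add_le hf (r * M + 1) (l - 1)
    rw [show r * M + 1 + (l - 1) = r * M + l by omega] at h3
    simp only [Finset.mem_Icc] at h1 h2
    omega
  have hB : ∀ r ≤ e i, B (f (r * M + 1)) < ∏ j, e j := by
    intro r hr
    have := hb r hr
    exact Nat.div_lt_of_lt_mul (by omega)
  have hstep : ∀ r < e i, D (B (f (r * M + 1))) i < D (B (f ((r + 1) * M + 1))) i := by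
    intro r hr
    have h1 := hA _ (Finset.mem_image_of_mem _ (Finset.mem_range.mpr hr))
    have h2 := (Finset.mem_filter.mp h1).2
    rw [nth_image hf _ _ _ (by omega), nth_image hf _ _ _ (by omega)] at h2
    rw [show r * M + 1 + M = (r + 1) * M + 1 by ring, add_zero] at h2
    have h3 : B (f (r * M + 1)) < B (f ((r + 1) * M + 1)) := by
      have h4 := strictMono_add_le hf (r * M + 1) M
      rw [show r * M + 1 + M = (r + 1) * M + 1 by ring] at h4
      have h5 := hb r hr.le
      have h6 : (f (r * M + 1) - 1 + M) / M ≤ B (f ((r + 1) * M + 1)) :=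
        Nat.div_le_div_right (by omega)
      rw [Nat.add_div_right _ hM] at h6
      exact h6
    have h4 := hcol _ _ h3 (hB (r + 1) hr)
    rwa [h2] at h4
  have hfin : ∀ r ≤ e i, r ≤ D (B (f (r * M + 1))) i := by
    intro r
    induction r with
    | zero => simp
    | succ r ih =>
      intro hr
      have h1 := hstep r hr
      have h2 := ih (by omega)
      omega
  have h1 := hfin (e i) le_rfl
  have h2 := hD2 _ (hB (e i) le_rfl) i
  omega

lemma upper_bound (M l t : ℕ) (e : Fin t → ℕ) (hl : 1 ≤ l) (hM : l ≤ M)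
    (c : Finset ℕ → Fin t) :
    ∃ i, (coloredSubgraph (M + l) (M * (∏ j, e j) + l) c i).Contains
      (loosePath (M + l) l (e i)) := by
  classical
  have hM0 : 0 < M := by omega
  let edge : ℕ → ℕ → Finset ℕ := fun a b => (Finset.range (M + l)).image
    fun s => if s < M then a * M + s + 1 else b * M + (s - M) + 1
  obtain ⟨i, v, hvE, p, hp, hpv, hcol⟩ := exists_chain e (fun a b => c (edge a b))
  let f : ℕ → ℕ := fun v => if v = 0 then 0 else p ((v - 1) / M) * M + (v - 1) % M + 1
  have hfe : ∀ q s, s < M → f (q * M + s + 1) = p q * M + s + 1 := by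
    intro q s hs
    have h1 : (q * M + s) / M = q := by
      rw [mul_comm, Nat.mul_add_div hM0, Nat.div_eq_of_lt hs, add_zero]
    have h2 : (q * M + s) % M = s := by
      rw [mul_comm, Nat.mul_add_mod, Nat.mod_eq_of_lt hs]
    simp [f, h1, h2]
  have hrep : ∀ v, 1 ≤ v → ∃ q s, s < M ∧ v = q * M + s + 1 := by
    intro v hv
    refine ⟨(v - 1) / M, (v - 1) % M, Nat.mod_lt _ hM0, ?_⟩
    have := Nat.div_add_mod' (v - 1) M
    omega
  have hf : StrictMono f := by
    apply strictMono_nat_of_lt_succ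
    intro n
    rcases Nat.eq_zero_or_pos n with rfl | hn
    · simp [f]
    · obtain ⟨q, s, hs, rfl⟩ := hrep n hn
      rw [hfe q s hs]
      by_cases h : s + 1 < M
      · have := hfe q (s + 1) h
        rw [← add_assoc] at this
        rw [this]; omega
      · have h' : s + 1 = M := by omega
        have := hfe (q + 1) 0 hM0
        rw [show q * M + s + 1 + 1 = (q + 1) * M + 0 + 1 by rw [add_one_mul]; omega, this]
        have h2 : (p q + 1) * M ≤ p (q + 1) * M :=
          Nat.mul_le_mul_right _ (hp (Nat.lt_succ_self q))
        rw [add_one_mul] at h2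
        omega
  have hvert : ∀ v, 1 ≤ v → v ≤ e i * M + l → 1 ≤ f v ∧ f v ≤ M * (∏ j, e j) + l := by
    intro v h1 h2
    obtain ⟨q, s, hs, rfl⟩ := hrep v h1
    rw [hfe q s hs]
    refine ⟨by omega, ?_⟩
    have hEM : p (e i) * M ≤ (∏ j, e j) * M := Nat.mul_le_mul_right _ (hpv ▸ hvE)
    rw [mul_comm M]
    rcases lt_trichotomy q (e i) with h | h | h
    · have h3 : (p q + 1) * M ≤ p (e i) * M := Nat.mul_le_mul_right _ (hp h)
      rw [add_one_mul] at h3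
      omega
    · subst h; omega
    · have h3 : (e i + 1) * M ≤ q * M := Nat.mul_le_mul_right _ h
      rw [add_one_mul] at h3
      omega
  refine ⟨i, f, hf, ?_, ?_⟩
  · intro v hv
    simp only [loosePath, coloredSubgraph, Nat.add_sub_cancel, Finset.mem_Icc] at hv ⊢
    exact hvert v hv.1 hv.2
  · intro A hA
    simp only [loosePath, coloredSubgraph, Nat.add_sub_cancel, Finset.mem_image,
      Finset.mem_range] at hA ⊢
    obtain ⟨r, hr, rfl⟩ := hA
    have hrM : (r + 1) * M ≤ e i * M := Nat.mul_le_mul_right _ hr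
    rw [add_one_mul] at hrM
    rw [Finset.mem_filter, Finset.mem_powersetCard]
    refine ⟨⟨?_, ?_⟩, ?_⟩
    · intro x hx
      obtain ⟨y, hy, rfl⟩ := Finset.mem_image.mp hx
      rw [Finset.mem_Icc] at hy
      exact Finset.mem_Icc.mpr (hvert y (by omega) (by omega))
    · rw [Finset.card_image_of_injective _ hf.injective]
      simp
    · rw [← hcol r hr]
      congr 1
      have hI : Finset.Icc (r * M + 1) (r * M + (M + l))
          = (Finset.range (M + l)).image fun s => r * M + s + 1 := by
        ext x
        simp only [Finset.mem_Icc, Finset.mem_image, Finset.mem_range]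
        constructor
        · intro h; exact ⟨x - (r * M + 1), by omega, by omega⟩
        · rintro ⟨s, hs, rfl⟩; omega
      rw [hI, Finset.image_image]
      apply Finset.image_congr
      intro s hs
      have hs' : s < M + l := by simpa using hs
      simp only [Function.comp]
      split_ifs with h
      · exact hfe r s h
      · rw [← hfe (r + 1) (s - M) (by omega), add_one_mul]
        congr 1; omega

/-- For `0 < 2ℓ ≤ k` and positive integers `e 0, …, e (t-1)`,
`OR(P_{e_1}^{k,ℓ}, …, P_{e_t}^{k,ℓ}) = (k-ℓ)·(e_1 ⋯ e_t) + ℓ`. -/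
theorem ordered_ramsey_loose_paths_shallow (k l t : ℕ) (e : Fin t → ℕ)
    (ht : 1 ≤ t) (hl : 1 ≤ l) (hlk : 2 * l ≤ k) (he : ∀ j, 1 ≤ e j) :
    ORnum k (fun j => loosePath k l (e j)) = (k - l) * (∏ j, e j) + l := by
  obtain ⟨M, rfl⟩ : ∃ M, k = M + l := ⟨k - l, by omega⟩
  have hM : l ≤ M := by omega
  rw [Nat.add_sub_cancel]
  unfold ORnum
  apply le_antisymm
  · exact Nat.sInf_le (upper_bound M l t e hl hM)
  · exact le_csInf ⟨_, upper_bound M l t e hl hM⟩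
      (fun n hn => lower_bound M l t e ht hl (by omega) n hn)
end

section
/- Let n, p be positive integers, let t ≥ 2, and let P be any ordered 2-uniform graph on 2^p vertices whose underlying (unordered) graph is a path on 2^p vertices. Then OR(K_{2^n}, P, ..., P), with t−1 copies of P, is at most 2^{((p+1)^{t−1}(np−1)+1)/p}, where K_{2^n} denotes the complete ordered 2-uniform graph on 2^n vertices. -/
open Finset in
lemma exists_enum (V : Finset ℕ) : ∃ g : ℕ → ℕ, (∀ i < V.card, g i ∈ V) ∧
    ∀ i j, i < j → j < V.card → g i < g j := by
  refine ⟨fun i => if h : i < V.card then V.orderEmbOfFin rfl ⟨i, h⟩ else 0, ?_, ?_⟩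
  · intro i hi
    simp only [hi, dif_pos]
    exact V.orderEmbOfFin_mem rfl _
  · intro i j hij hj
    have hi : i < V.card := hij.trans hj
    simp only [hi, hj, dif_pos]
    exact (V.orderEmbOfFin rfl).strictMono (by simpa using hij)

lemma exists_intervals (V : Finset ℕ) (m s : ℕ) (h : m * s ≤ V.card) :
    ∃ I : ℕ → Finset ℕ, (∀ i ∈ Set.Icc 1 m, I i ⊆ V ∧ (I i).card = s) ∧
      ∀ i ∈ Set.Icc 1 m, ∀ j ∈ Set.Icc 1 m, i < j → ∀ x ∈ I i, ∀ y ∈ I j, x < y := by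
  obtain ⟨g, hg, hm⟩ := exists_enum V
  have key : ∀ i ∈ Set.Icc 1 m, ∀ a < s, (i - 1) * s + a < V.card := by
    rintro i ⟨h1, h2⟩ a ha
    obtain ⟨k, rfl⟩ : ∃ k, i = k + 1 := ⟨i - 1, by omega⟩
    have : (k + 1) * s ≤ m * s := Nat.mul_le_mul_right s h2
    have e : (k + 1) * s = k * s + s := by ring
    simp only [Nat.add_sub_cancel]
    omega
  refine ⟨fun i => (Finset.range s).image fun a => g ((i - 1) * s + a), ?_, ?_⟩
  · intro i hi
    refine ⟨?_, ?_⟩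
    · intro x hx
      obtain ⟨a, ha, rfl⟩ := Finset.mem_image.1 hx
      exact hg _ (key i hi a (Finset.mem_range.1 ha))
    · rw [Finset.card_image_of_injOn, Finset.card_range]
      intro a ha b hb hab
      have ha' : a < s := by simpa using ha
      have hb' : b < s := by simpa using hb
      simp only at hab
      rcases lt_trichotomy a b with hl | hl | hl
      · have := hm ((i-1)*s+a) ((i-1)*s+b) (by omega) (key i hi b hb')
        omega
      · exact hl
      · have := hm ((i-1)*s+b) ((i-1)*s+a) (by omega) (key i hi a ha')
        omega
  · intro i hi j hj hij x hx y hy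
    obtain ⟨a, ha, rfl⟩ := Finset.mem_image.1 hx
    obtain ⟨b, hb, rfl⟩ := Finset.mem_image.1 hy
    rw [Finset.mem_range] at ha hb
    apply hm _ _ _ (key j hj b hb)
    have h1 := hi.1
    obtain ⟨k, rfl⟩ : ∃ k, i = k + 1 := ⟨i - 1, by omega⟩
    have : (k + 1) * s ≤ (j - 1) * s := Nat.mul_le_mul_right s (by omega)
    have e : (k + 1) * s = k * s + s := by ring
    simp only [Nat.add_sub_cancel]
    omega

/-- Threshold for the two-color statement. -/
def thr (m : ℕ) : ℕ → ℕ
  | 0 => 1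
  | n + 1 => m * (2 * thr m n - 1)

lemma thr_le (p n : ℕ) : thr (2 ^ p) (n + 1) ≤ 2 ^ ((n + 1) * (p + 1) - 1) := by
  induction n with
  | zero => simp [thr]
  | succ n ih =>
    rw [thr]
    calc 2 ^ p * (2 * thr (2 ^ p) (n + 1) - 1)
        ≤ 2 ^ p * (2 * 2 ^ ((n + 1) * (p + 1) - 1)) := Nat.mul_le_mul_left _ (by omega)
      _ = 2 ^ (p + 1 + ((n + 1) * (p + 1) - 1)) := by ring
      _ = _ := by
        congr 1
        have : (n + 1 + 1) * (p + 1) = (n + 1) * (p + 1) + (p + 1) := by ring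
        have : 1 ≤ (n + 1) * (p + 1) := Nat.mul_pos (by omega) (by omega)
        omega

/-- There is an ordered copy of the path given by `v` inside `V`. -/
def HasPath (adj : ℕ → ℕ → Prop) (m : ℕ) (v : ℕ → ℕ) (V : Finset ℕ) : Prop :=
  ∃ f : ℕ → ℕ, StrictMonoOn f (Set.Icc 1 m) ∧ (∀ i ∈ Set.Icc 1 m, f i ∈ V) ∧
    ∀ j ∈ Set.Icc 1 (m - 1), adj (f (v j)) (f (v (j + 1)))

lemma HasPath.mono {adj : ℕ → ℕ → Prop} {m : ℕ} {v : ℕ → ℕ} {V W : Finset ℕ} (h : V ⊆ W)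
    (H : HasPath adj m v V) : HasPath adj m v W := by
  obtain ⟨f, h1, h2, h3⟩ := H
  exact ⟨f, h1, fun i hi => h (h2 i hi), h3⟩

lemma two_color (adj : ℕ → ℕ → Prop) (hs : ∀ x y, adj x y → adj y x) (m : ℕ) (hm : 1 ≤ m)
    (v : ℕ → ℕ) (hv : Set.BijOn v (Set.Icc 1 m) (Set.Icc 1 m)) (n : ℕ) :
    ∀ V : Finset ℕ, thr m n ≤ V.card →
      (∃ S ⊆ V, S.card = 2 ^ n ∧ ∀ x ∈ S, ∀ y ∈ S, x ≠ y → ¬ adj x y) ∨ HasPath adj m v V := by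
  classical
  induction n with
  | zero =>
    intro V hV
    left
    obtain ⟨S, hS, hc⟩ := Finset.exists_subset_card_eq hV
    refine ⟨S, hS, by simpa [thr] using hc, ?_⟩
    intro x hx y hy hxy
    exact absurd (Finset.card_le_one.1 (by simp [hc, thr]) x hx y hy) hxy
  | succ n ih =>
    intro V hV
    by_cases hP : HasPath adj m v V
    · exact Or.inr hP
    left
    obtain ⟨I, hI, hlt⟩ := exists_intervals V m _ hV
    have hpos : 1 ≤ thr m n := by
      clear ih hV hI
      induction n with
      | zero => simp [thr]
      | succ n ih => exact Nat.mul_pos hm (by omega)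
    let good : ℕ → ℕ → Prop := fun k y => ∃ x : ℕ → ℕ, (∀ j ∈ Set.Icc 1 k, x j ∈ I (v j)) ∧
      (∀ j, 1 ≤ j → j < k → adj (x j) (x (j + 1))) ∧ x k = y
    let A : ℕ → Finset ℕ := fun k => (I (v k)).filter (good k)
    by_contra hcon
    have hA : ∀ k, 1 ≤ k → k ≤ m → thr m n ≤ (A k).card := by
      intro k hk
      induction k, hk using Nat.le_induction with
      | base =>
        intro h1
        have : A 1 = I (v 1) := by
          apply Finset.filter_true_of_mem
          intro y hy
          refine ⟨fun _ => y, ?_, ?_, rfl⟩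
          · rintro j ⟨h1, h2⟩
            obtain rfl : j = 1 := by omega
            exact hy
          · intros; omega
        rw [this, (hI _ (hv.mapsTo ⟨le_rfl, h1⟩)).2]
        omega
      | succ k hk ihk =>
        intro hkm
        by_contra hlt'
        have hvk := hv.mapsTo (show k ∈ Set.Icc 1 m from ⟨hk, by omega⟩)
        have hvk1 := hv.mapsTo (show k + 1 ∈ Set.Icc 1 m from ⟨by omega, hkm⟩)
        have hne : v k ≠ v (k + 1) := fun h => by
          have := hv.injOn (show k ∈ Set.Icc 1 m from ⟨hk, by omega⟩)
            (show k + 1 ∈ Set.Icc 1 m from ⟨by omega, hkm⟩) h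
          omega
        have hAk : A k ⊆ I (v k) := Finset.filter_subset _ _
        have hAk1 : A (k + 1) ⊆ I (v (k + 1)) := Finset.filter_subset _ _
        set B := I (v (k + 1)) \ A (k + 1) with hB
        have hBI : B ⊆ I (v (k + 1)) := Finset.sdiff_subset
        have hBc : thr m n ≤ B.card := by
          rw [hB, Finset.card_sdiff_of_subset hAk1, (hI _ hvk1).2]
          omega
        have hno : ∀ y ∈ A k, ∀ z ∈ B, ¬ adj y z := by
          intro y hy z hz hyz
          obtain ⟨hz1, hz2⟩ := Finset.mem_sdiff.1 hz
          apply hz2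
          obtain ⟨hy1, x, hx1, hx2, hx3⟩ := Finset.mem_filter.1 hy
          refine Finset.mem_filter.2 ⟨hz1, fun j => if j = k + 1 then z else x j, ?_, ?_, ?_⟩
          · rintro j ⟨hj1, hj2⟩
            by_cases hj : j = k + 1
            · simp only [hj, if_true]; exact hz1
            · simp only [hj, if_false]; exact hx1 j ⟨hj1, by omega⟩
          · intro j hj1 hj2
            have : j ≠ k + 1 := by omega
            simp only [this, if_false]
            by_cases hj : j = k
            · subst hj
              simp only [if_true, hx3]; exact hyz
            · have : j + 1 ≠ k + 1 := by omega
              simp only [this, if_false]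
              exact hx2 j hj1 (by omega)
          · simp
        have hAV : A k ⊆ V := hAk.trans (hI _ hvk).1
        have hBV : B ⊆ V := hBI.trans (hI _ hvk1).1
        rcases ih (A k) (ihk (by omega)) with ⟨S, hS, hSc, hSi⟩ | h
        swap
        · exact hP (h.mono hAV)
        rcases ih B hBc with ⟨T, hT, hTc, hTi⟩ | h
        swap
        · exact hP (h.mono hBV)
        apply hcon
        refine ⟨S ∪ T, Finset.union_subset (hS.trans hAV) (hT.trans hBV), ?_, ?_⟩
        · rw [Finset.card_union_of_disjoint, hSc, hTc]
          · ring
          · rw [Finset.disjoint_left]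
            intro x hx hx'
            have h1 := hAk (hS hx)
            have h2 := hBI (hT hx')
            rcases lt_or_gt_of_ne hne with h | h
            · exact lt_irrefl _ (hlt _ hvk _ hvk1 h x h1 x h2)
            · exact lt_irrefl _ (hlt _ hvk1 _ hvk h x h2 x h1)
        · intro x hx y hy hxy
          rcases Finset.mem_union.1 hx with hx | hx <;> rcases Finset.mem_union.1 hy with hy | hy
          · exact hSi x hx y hy hxy
          · exact hno x (hS hx) y (hT hy)
          · exact fun h => hno y (hS hy) x (hT hx) (hs _ _ h)
          · exact hTi x hx y hy hxy
    have hAm : (A m).Nonempty := Finset.card_pos.1 (lt_of_lt_of_le hpos (hA m hm le_rfl))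
    obtain ⟨y, hy⟩ := hAm
    obtain ⟨-, x, hx1, hx2, -⟩ := Finset.mem_filter.1 hy
    apply hP
    let w := Function.invFunOn v (Set.Icc 1 m)
    have hw : ∀ i ∈ Set.Icc 1 m, w i ∈ Set.Icc 1 m ∧ v (w i) = i := fun i hi =>
      ⟨Function.invFunOn_mem (hv.surjOn hi), Function.invFunOn_eq (hv.surjOn hi)⟩
    have hwv : ∀ j ∈ Set.Icc 1 m, w (v j) = j := fun j hj =>
      hv.injOn (hw _ (hv.mapsTo hj)).1 hj (hw _ (hv.mapsTo hj)).2
    have hmem : ∀ i ∈ Set.Icc 1 m, x (w i) ∈ I i := fun i hi => by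
      have := hx1 _ (hw i hi).1
      rwa [(hw i hi).2] at this
    refine ⟨fun i => x (w i), ?_, ?_, ?_⟩
    · intro i hi j hj hij
      exact hlt i hi j hj hij _ (hmem i hi) _ (hmem j hj)
    · intro i hi
      exact (hI i hi).1 (hmem i hi)
    · rintro j ⟨hj1, hj2⟩
      simp only
      rw [hwv j ⟨hj1, by omega⟩, hwv (j + 1) ⟨by omega, by omega⟩]
      exact hx2 j hj1 (by omega)

/-- Iterated exponent. -/
def expo (n p : ℕ) : ℕ → ℕ
  | 0 => n
  | u + 1 => expo n p u * (p + 1) - 1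

lemma expo_pos (n p : ℕ) (hn : 1 ≤ n) (hp : 1 ≤ p) (u : ℕ) : 1 ≤ expo n p u := by
  induction u with
  | zero => exact hn
  | succ u ih =>
    rw [expo]
    have : 1 * (1 + 1) ≤ expo n p u * (p + 1) := Nat.mul_le_mul ih (by omega)
    omega

lemma expo_real (n p : ℕ) (hn : 1 ≤ n) (hp : 1 ≤ p) (u : ℕ) :
    (expo n p u : ℝ) * p = ((p : ℝ) + 1) ^ u * ((n : ℝ) * p - 1) + 1 := by
  induction u with
  | zero => simp [expo]
  | succ u ih =>
    have h := expo_pos n p hn hp u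
    have : 1 ≤ expo n p u * (p + 1) := Nat.mul_pos h (by omega)
    rw [expo, Nat.cast_sub this]
    push_cast
    rw [pow_succ]
    linear_combination ((p : ℝ) + 1) * ih

lemma multi_color (n p : ℕ) (hn : 1 ≤ n) (hp : 1 ≤ p) (v : ℕ → ℕ)
    (hv : Set.BijOn v (Set.Icc 1 (2 ^ p)) (Set.Icc 1 (2 ^ p))) (c : Finset ℕ → ℕ) (u : ℕ) :
    ∀ V : Finset ℕ, 2 ^ expo n p u ≤ V.card →
      (∃ S ⊆ V, S.card = 2 ^ n ∧ ∀ x ∈ S, ∀ y ∈ S, x ≠ y → c {x, y} ∉ Set.Icc 1 u) ∨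
      ∃ i ∈ Set.Icc 1 u, HasPath (fun x y => c {x, y} = i) (2 ^ p) v V := by
  induction u with
  | zero =>
    intro V hV
    left
    obtain ⟨S, hS, hc⟩ := Finset.exists_subset_card_eq hV
    refine ⟨S, hS, hc, ?_⟩
    rintro x - y - - ⟨h1, h2⟩
    omega
  | succ u ih =>
    intro V hV
    have h := expo_pos n p hn hp u
    have hthr : thr (2 ^ p) (expo n p u) ≤ V.card := by
      refine le_trans ?_ hV
      have := thr_le p (expo n p u - 1)
      rwa [Nat.sub_add_cancel h] at this
    rcases two_color (fun x y => c {x, y} = u + 1) (fun x y h => by rwa [Finset.pair_comm])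
      (2 ^ p) Nat.one_le_two_pow v hv _ V hthr with ⟨S, hS, hSc, hSi⟩ | H
    · rcases ih S hSc.ge with ⟨T, hT, hTc, hTi⟩ | ⟨i, hi, H⟩
      · left
        refine ⟨T, hT.trans hS, hTc, ?_⟩
        rintro x hx y hy hxy ⟨h1, h2⟩
        have h3 := hTi x hx y hy hxy
        have h4 := hSi x (hT hx) y (hT hy) hxy
        exact h3 ⟨h1, by omega⟩
      · exact Or.inr ⟨i, ⟨hi.1, by have := hi.2; omega⟩, H.mono hS⟩
    · exact Or.inr ⟨u + 1, ⟨by omega, le_rfl⟩, H⟩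

lemma extend_map (f : ℕ → ℕ) (m N : ℕ) (hf : StrictMonoOn f (Set.Icc 1 m))
    (hN : ∀ i ∈ Set.Icc 1 m, f i ∈ Finset.Icc 1 N) :
    ∃ g : ℕ → ℕ, StrictMono g ∧ ∀ i ∈ Set.Icc 1 m, g i = f i := by
  refine ⟨fun i => if i = 0 then 0 else if i ≤ m then f i else N + i, ?_, ?_⟩
  · intro i j hij
    have hj0 : j ≠ 0 := by omega
    simp only [hj0, if_false]
    have hb : ∀ k, k ≠ 0 → k ≤ m → 1 ≤ f k ∧ f k ≤ N := fun k h1 h2 =>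
      Finset.mem_Icc.1 (hN k ⟨by omega, h2⟩)
    by_cases hi : i = 0
    · by_cases hj : j ≤ m
      · have := hb j hj0 hj
        simp only [hi, hj, if_true]; omega
      · simp only [hi, hj, if_true, if_false]; omega
    · by_cases hj : j ≤ m
      · have him : i ≤ m := by omega
        simp only [hi, hj, him, if_true, if_false]
        exact hf ⟨by omega, him⟩ ⟨by omega, hj⟩ hij
      · by_cases him : i ≤ m
        · have := hb i hi him
          simp only [hi, hj, him, if_true, if_false]; omega
        · simp only [hi, hj, him, if_false]; omega
  · rintro i ⟨h1, h2⟩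
    have : i ≠ 0 := by omega
    simp [this, h2]


/-- `P` is an ordered 2-uniform graph on vertex set `{1, …, m}` whose underlying
(unordered) graph is a path on `m` vertices: there is a relabeling `v` of `{1, …, m}`
so that the edges of `P` are exactly `{v j, v (j+1)}` for `j = 1, …, m-1`. -/
def IsOrderedPathGraph (P : OrderedHypergraph) (m : ℕ) : Prop :=
  P.n = m ∧ ∃ v : ℕ → ℕ, Set.BijOn v (Set.Icc 1 m) (Set.Icc 1 m) ∧
    P.edges = (Finset.Icc 1 (m - 1)).image fun j => {v j, v (j + 1)}

/-- For positive integers `n, p`, `t = u+1 ≥ 2` colors, and `P` any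
ordered 2-uniform path on `2^p` vertices,
`OR(K_{2^n}, P, …, P) ≤ 2^{((p+1)^{t-1}(np-1)+1)/p}` (with `t-1 = u` copies of `P`). -/
theorem ordered_ramsey_complete_vs_paths (n p u : ℕ) (hn : 1 ≤ n) (hp : 1 ≤ p) (hu : 1 ≤ u)
    (P : OrderedHypergraph) (hP : IsOrderedPathGraph P (2 ^ p)) :
    (ORnum 2 (Fin.cons (completeHG 2 (2 ^ n)) (fun _ : Fin u => P)) : ℝ) ≤
      (2 : ℝ) ^ (((((p : ℝ) + 1) ^ u * ((n : ℝ) * (p : ℝ) - 1) + 1)) / (p : ℝ)) := by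
  have hexp : (((((p : ℝ) + 1) ^ u * ((n : ℝ) * (p : ℝ) - 1) + 1)) / (p : ℝ)) =
      (expo n p u : ℝ) := by
    rw [← expo_real n p hn hp u]
    have : (p : ℝ) ≠ 0 := by positivity
    field_simp
  rw [hexp, Real.rpow_natCast]
  suffices h : ORnum 2 (Fin.cons (completeHG 2 (2 ^ n)) (fun _ : Fin u => P)) ≤
      2 ^ expo n p u by exact_mod_cast h
  apply Nat.sInf_le
  intro c
  obtain ⟨hPn, v, hv, hPe⟩ := hP
  rcases multi_color n p hn hp v hv (fun A => (c A : ℕ)) u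
    (Finset.Icc 1 (2 ^ expo n p u)) (by simp) with ⟨S, hS, hSc, hSi⟩ | ⟨i, hi, f, hf1, hf2, hf3⟩
  · refine ⟨0, ?_⟩
    rw [Fin.cons_zero]
    obtain ⟨g, hg1, hg2⟩ := exists_enum S
    rw [hSc] at hg1 hg2
    have hmem : ∀ i ∈ Set.Icc 1 (2 ^ n), g (i - 1) ∈ S := fun i hi => by
      have := hi.1
      have := hi.2
      exact hg1 _ (by omega)
    obtain ⟨f, hfm, hfe⟩ := extend_map (fun i => g (i - 1)) (2 ^ n) (2 ^ expo n p u)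
      (fun i hi j hj hij => by
        have := hi.1
        have := hj.2
        exact hg2 _ _ (by omega) (by omega)) (fun i hi => hS (hmem i hi))
    have hfS : ∀ i ∈ Finset.Icc 1 (2 ^ n), f i ∈ S := fun i hi => by
      have hi' : i ∈ Set.Icc 1 (2 ^ n) := by simpa using hi
      rw [hfe i hi']
      exact hmem i hi'
    refine ⟨f, hfm, fun w hw => hS (hfS w hw), ?_⟩
    intro A hA
    obtain ⟨hA1, hA2⟩ := Finset.mem_powersetCard.1 hA
    obtain ⟨x, y, hxy, rfl⟩ := Finset.card_eq_two.1 hA2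
    have hx := hfS x (hA1 (by simp))
    have hy := hfS y (hA1 (by simp))
    have hne : f x ≠ f y := fun h => hxy (hfm.injective h)
    have hc := hSi _ hx _ hy hne
    rw [Finset.image_insert, Finset.image_singleton]
    refine Finset.mem_filter.2 ⟨Finset.mem_powersetCard.2 ⟨?_, Finset.card_pair hne⟩, ?_⟩
    · intro z hz
      rcases Finset.mem_insert.1 hz with rfl | hz
      · exact hS hx
      · rw [Finset.mem_singleton.1 hz]; exact hS hy
    · apply Fin.ext
      have hlt := (c {f x, f y}).isLt
      have : ¬ (1 ≤ (c {f x, f y} : ℕ) ∧ (c {f x, f y} : ℕ) ≤ u) := hc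
      simp only [Fin.val_zero]
      omega
  · have hi1 := hi.1
    have hi2 := hi.2
    refine ⟨Fin.succ ⟨i - 1, by omega⟩, ?_⟩
    rw [Fin.cons_succ]
    obtain ⟨g, hgm, hge⟩ := extend_map f (2 ^ p) (2 ^ expo n p u) hf1 hf2
    have hgV : ∀ w ∈ Set.Icc 1 (2 ^ p), g w ∈ Finset.Icc 1 (2 ^ expo n p u) := fun w hw => by
      rw [hge w hw]; exact hf2 w hw
    refine ⟨g, hgm, ?_, ?_⟩
    · intro w hw
      rw [hPn] at hw
      exact hgV w (by simpa using hw)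
    · intro A hA
      rw [hPe] at hA
      obtain ⟨j, hj, rfl⟩ := Finset.mem_image.1 hA
      obtain ⟨hj1, hj2⟩ := Finset.mem_Icc.1 hj
      have m1 : j ∈ Set.Icc 1 (2 ^ p) := ⟨hj1, by omega⟩
      have m2 : j + 1 ∈ Set.Icc 1 (2 ^ p) := ⟨by omega, by omega⟩
      have hne : g (v j) ≠ g (v (j + 1)) := fun h => by
        have := hv.injOn m1 m2 (hgm.injective h)
        omega
      have hcol := hf3 j ⟨hj1, hj2⟩
      rw [Finset.image_insert, Finset.image_singleton]
      refine Finset.mem_filter.2 ⟨Finset.mem_powersetCard.2 ⟨?_, Finset.card_pair hne⟩, ?_⟩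
      · intro z hz
        rcases Finset.mem_insert.1 hz with rfl | hz
        · exact hgV _ (hv.mapsTo m1)
        · rw [Finset.mem_singleton.1 hz]; exact hgV _ (hv.mapsTo m2)
      · apply Fin.ext
        rw [hge _ (hv.mapsTo m1), hge _ (hv.mapsTo m2)]
        simp only [Fin.val_succ]
        simp only at hcol
        omega
end

section
/- For an integer k ≥ 1, positive integers e_1,...,e_t, and integers r_1,...,r_t ∈ {0,...,k}, the ordered Ramsey number satisfies OR(M_{e_1}^{k,r_1},...,M_{e_t}^{k,r_t}) ≥ k·(1 + Σ_{i=1}^t (e_i − 1)). -/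
/-- The `(k,r)`-nested matching `M_e^{k,r}` on `e` edges, written (order-isomorphically)
on the vertex set `{1, …, ke}`:  edge `i` (for `i = 0, …, e-1`, with `i = 0` the edge of
`M_1^{k,r}` and edge `i+1` obtained from edge `i` by taking the `k-r` greatest vertices
below and the `r` least vertices above all previous vertices) consists of the block of
`k-r` vertices `{(e-1-i)(k-r)+1, …, (e-i)(k-r)}` together with the block of `r` vertices
`{e(k-r)+ir+1, …, e(k-r)+(i+1)r}`. -/
def nestedMatching (k r e : ℕ) : OrderedHypergraph :=
  ⟨k * e,
    (Finset.range e).image fun i =>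
      Finset.Icc ((e - 1 - i) * (k - r) + 1) ((e - i) * (k - r)) ∪
        Finset.Icc (e * (k - r) + i * r + 1) (e * (k - r) + (i + 1) * r)⟩

/-- The `i`-th edge of the nested matching. -/
def nmEdge (k r e i : ℕ) : Finset ℕ :=
  Finset.Icc ((e - 1 - i) * (k - r) + 1) ((e - i) * (k - r)) ∪
        Finset.Icc (e * (k - r) + i * r + 1) (e * (k - r) + (i + 1) * r)

theorem nm_mem (k r e : ℕ) (A : Finset ℕ) :
    A ∈ (nestedMatching k r e).edges ↔ ∃ i < e, nmEdge k r e i = A := by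
  simp [nestedMatching, nmEdge]

theorem nmEdge_shift (k r e i : ℕ) (h : i < e) :
    nmEdge k r (e + 1) i = (nmEdge k r e i).image (fun v => v + (k - r)) := by
  obtain ⟨d, rfl⟩ : ∃ d, e = i + 1 + d := ⟨e - (i + 1), by omega⟩
  unfold nmEdge
  rw [Finset.image_union, Finset.image_add_right_Icc, Finset.image_add_right_Icc]
  have h1 : i + 1 + d + 1 - 1 - i = d + 1 := by omega
  have h2 : i + 1 + d + 1 - i = d + 2 := by omega
  have h3 : i + 1 + d - 1 - i = d := by omega
  have h4 : i + 1 + d - i = d + 1 := by omega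
  rw [h1, h2, h3, h4]
  congr 2 <;> ring

theorem nmEdge_outer (k r e : ℕ) (hr : r ≤ k) :
    nmEdge k r (e + 1) e =
      Finset.Icc 1 (k - r) ∪ Finset.Icc (k - r + k * e + 1) (k * (e + 1)) := by
  obtain ⟨s, rfl⟩ := Nat.exists_eq_add_of_le hr
  unfold nmEdge
  have h1 : e + 1 - 1 - e = 0 := by omega
  have h2 : e + 1 - e = 1 := by omega
  have h3 : r + s - r = s := by omega
  rw [h1, h2, h3]
  congr 2 <;> ring

theorem nmEdge_sub (k r e i : ℕ) (hr : r ≤ k) (hi : i < e) :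
    nmEdge k r e i ⊆ Finset.Icc 1 (k * e) := by
  induction e with
  | zero => omega
  | succ e ih =>
    have hke : k * (e + 1) = k * e + k := by ring
    rcases Nat.lt_succ_iff_lt_or_eq.mp hi with h | h
    · rw [nmEdge_shift k r e i h]
      intro v hv
      obtain ⟨w, hw, rfl⟩ := Finset.mem_image.mp hv
      have := Finset.mem_Icc.mp (ih h hw)
      rw [Finset.mem_Icc]
      omega
    · subst h
      rw [nmEdge_outer k r i hr]
      intro v hv
      simp only [Finset.mem_union, Finset.mem_Icc] at hv ⊢
      have : 0 ≤ k * i := Nat.zero_le _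
      omega

theorem nmEdge_card (k r e i : ℕ) (hr : r ≤ k) (hi : i < e) :
    (nmEdge k r e i).card = k := by
  induction e with
  | zero => omega
  | succ e ih =>
    have hke : k * (e + 1) = k * e + k := by ring
    rcases Nat.lt_succ_iff_lt_or_eq.mp hi with h | h
    · rw [nmEdge_shift k r e i h, Finset.card_image_of_injective, ih h]
      intro a b hab
      simpa using hab
    · subst h
      rw [nmEdge_outer k r i hr, Finset.card_union_of_disjoint]
      · simp only [Nat.card_Icc]
        omega
      · rw [Finset.disjoint_left]
        intro v hv hw
        simp only [Finset.mem_Icc] at hv hw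
        omega

theorem nmEdge_cover (k r e v : ℕ) (hr : r ≤ k) (hv : v ∈ Finset.Icc 1 (k * e)) :
    ∃ i < e, v ∈ nmEdge k r e i := by
  induction e generalizing v with
  | zero => simp at hv
  | succ e ih =>
    have hke : k * (e + 1) = k * e + k := by ring
    rw [Finset.mem_Icc] at hv
    by_cases h : k - r < v ∧ v ≤ k - r + k * e
    · obtain ⟨i, hi, hm⟩ := ih (v - (k - r)) (by rw [Finset.mem_Icc]; omega)
      refine ⟨i, by omega, ?_⟩
      rw [nmEdge_shift k r e i hi, Finset.mem_image]
      exact ⟨_, hm, by omega⟩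
    · refine ⟨e, by omega, ?_⟩
      rw [nmEdge_outer k r e hr]
      simp only [Finset.mem_union, Finset.mem_Icc]
      omega

/-- Embedding of a nested matching in color `x` into the interval `(a, b]`. -/
def NEmb {t : ℕ} (k r e : ℕ) (c : Finset ℕ → Fin t) (a b : ℕ) (x : Fin t) : Prop :=
  ∃ f : ℕ → ℕ, StrictMonoOn f (Set.Icc 1 (k * e)) ∧
    (∀ v, 1 ≤ v → v ≤ k * e → a < f v ∧ f v ≤ b) ∧
    ∀ i < e, c ((nmEdge k r e i).image f) = x

theorem contains_of_NEmb {t : ℕ} (k r e N : ℕ) (hr : r ≤ k) (c : Finset ℕ → Fin t) (x : Fin t)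
    (h : NEmb k r e c 0 N x) : (coloredSubgraph k N c x).Contains (nestedMatching k r e) := by
  obtain ⟨f, hf, hb, hc⟩ := h
  set g : ℕ → ℕ := fun v => if v = 0 then 0 else if v ≤ k * e then f v else N + v with hg
  have hgf : ∀ v ∈ Finset.Icc 1 (k * e), g v = f v := by
    intro v hv
    rw [Finset.mem_Icc] at hv
    simp only [hg]
    rw [if_neg (by omega), if_pos hv.2]
  have hgm : StrictMono g := by
    intro u v huv
    simp only [hg]
    rw [if_neg (by omega : v ≠ 0)]
    by_cases hu : u = 0
    · rw [if_pos hu]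
      split_ifs with h1
      · exact (hb v (by omega) h1).1
      · omega
    · rw [if_neg hu]
      by_cases h1 : v ≤ k * e
      · rw [if_pos h1, if_pos (by omega)]
        exact hf ⟨by omega, by omega⟩ ⟨by omega, by omega⟩ huv
      · rw [if_neg h1]
        split_ifs with h2
        · have := (hb u (by omega) h2).2
          omega
        · omega
  refine ⟨g, hgm, ?_, ?_⟩
  · intro v hv
    have hv' : v ∈ Finset.Icc 1 (k * e) := hv
    rw [hgf v hv']
    rw [Finset.mem_Icc] at hv'
    have := hb v hv'.1 hv'.2
    show f v ∈ Finset.Icc 1 N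
    rw [Finset.mem_Icc]
    omega
  · intro A hA
    obtain ⟨i, hi, rfl⟩ := (nm_mem k r e A).mp hA
    have hsub := nmEdge_sub k r e i hr hi
    have himg : (nmEdge k r e i).image g = (nmEdge k r e i).image f :=
      Finset.image_congr (fun v hv => hgf v (hsub hv))
    show _ ∈ (Finset.powersetCard k (Finset.Icc 1 N)).filter fun A => c A = x
    rw [Finset.mem_filter, Finset.mem_powersetCard]
    refine ⟨⟨?_, ?_⟩, ?_⟩
    · rw [himg]
      intro w hw
      obtain ⟨v, hv, rfl⟩ := Finset.mem_image.mp hw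
      have hv' := Finset.mem_Icc.mp (hsub hv)
      have := hb v hv'.1 hv'.2
      rw [Finset.mem_Icc]
      omega
    · rw [Finset.card_image_of_injective _ hgm.injective]
      exact nmEdge_card k r e i hr hi
    · rw [himg]
      exact hc i hi

theorem NEmb_of_contains {t : ℕ} (k r e N : ℕ) (c : Finset ℕ → Fin t) (x : Fin t)
    (h : (coloredSubgraph k N c x).Contains (nestedMatching k r e)) : NEmb k r e c 0 N x := by
  obtain ⟨f, hf, hb, hc⟩ := h
  refine ⟨f, hf.strictMonoOn _, ?_, ?_⟩
  · intro v h1 h2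
    have : f v ∈ Finset.Icc 1 N := hb v (Finset.mem_Icc.mpr ⟨h1, h2⟩)
    rw [Finset.mem_Icc] at this
    omega
  · intro i hi
    have h := hc (nmEdge k r e i) ((nm_mem k r e _).mpr ⟨i, hi, rfl⟩)
    exact (Finset.mem_filter.mp h).2

/-- Wrapping an edge around an embedded matching. -/
theorem NEmb_wrap {t : ℕ} (k r e M a : ℕ) (hr : r ≤ k) (c : Finset ℕ → Fin t) (x : Fin t)
    (hS : c ((Finset.Icc 1 k).image (fun j => a + j * (M + 1))) = x)
    (h : NEmb k r e c (a + (k - r) * (M + 1)) (a + (k - r) * (M + 1) + M) x) :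
    NEmb k r (e + 1) c a (a + (k + 1) * (M + 1)) x := by
  obtain ⟨f, hf, hb, hc⟩ := h
  have hke : k * (e + 1) = k * e + k := by ring
  set g : ℕ → ℕ := fun v => if v ≤ k - r then a + v * (M + 1) else
    if v ≤ k - r + k * e then f (v - (k - r)) else a + (v - k * e) * (M + 1) with hg
  have g1 : ∀ v, v ≤ k - r → g v = a + v * (M + 1) := fun v hv => by
    simp only [hg]; rw [if_pos hv]
  have g2 : ∀ v, k - r < v → v ≤ k - r + k * e → g v = f (v - (k - r)) := fun v h1 h2 => by
    simp only [hg]; rw [if_neg (by omega), if_pos h2]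
  have g3 : ∀ v, k - r + k * e < v → g v = a + (v - k * e) * (M + 1) := fun v h1 => by
    simp only [hg]; rw [if_neg (by omega), if_neg (by omega)]
  have hmul : ∀ x y : ℕ, x < y → x * (M + 1) + (M + 1) ≤ y * (M + 1) := fun x y hxy => by
    have := Nat.mul_le_mul_right (M + 1) (Nat.succ_le_of_lt hxy)
    rw [Nat.succ_mul] at this
    exact this
  have hmul' : ∀ x y : ℕ, x ≤ y → x * (M + 1) ≤ y * (M + 1) := fun x y hxy =>
    Nat.mul_le_mul_right (M + 1) hxy
  refine ⟨g, ?_, ?_, ?_⟩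
  · intro u hu v hv huv
    rw [Set.mem_Icc] at hu hv
    rcases le_or_gt v (k - r) with h1 | h1
    · rw [g1 v h1, g1 u (by omega)]
      have := hmul u v huv
      omega
    · rcases le_or_gt v (k - r + k * e) with h2 | h2
      · rw [g2 v h1 h2]
        rcases le_or_gt u (k - r) with h3 | h3
        · rw [g1 u h3]
          have := hmul' u (k - r) h3
          have := (hb (v - (k - r)) (by omega) (by omega)).1
          omega
        · rw [g2 u h3 (by omega)]
          exact hf ⟨by omega, by omega⟩ ⟨by omega, by omega⟩ (by omega)
      · rw [g3 v h2]
        rcases le_or_gt u (k - r) with h3 | h3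
        · rw [g1 u h3]
          have := hmul u (v - k * e) (by omega)
          omega
        · rcases le_or_gt u (k - r + k * e) with h4 | h4
          · rw [g2 u h3 h4]
            have := (hb (u - (k - r)) (by omega) (by omega)).2
            have := hmul (k - r) (v - k * e) (by omega)
            omega
          · rw [g3 u h4]
            have := hmul (u - k * e) (v - k * e) (by omega)
            omega
  · intro v hv1 hv2
    rcases le_or_gt v (k - r) with h1 | h1
    · rw [g1 v h1]
      have := hmul 0 v (by omega)
      have := hmul v (k + 1) (by omega)
      omega
    · rcases le_or_gt v (k - r + k * e) with h2 | h2
      · rw [g2 v h1 h2]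
        have := hb (v - (k - r)) (by omega) (by omega)
        have := hmul (k - r) (k + 1) (by omega)
        omega
      · rw [g3 v h2]
        have := hmul 0 (v - k * e) (by omega)
        have := hmul (v - k * e) (k + 1) (by omega)
        omega
  · intro i hi
    rcases Nat.lt_succ_iff_lt_or_eq.mp hi with h | h
    · rw [nmEdge_shift k r e i h, Finset.image_image, ← hc i h]
      congr 1
      apply Finset.image_congr
      intro v hv
      have hv' := Finset.mem_Icc.mp (nmEdge_sub k r e i hr h hv)
      simp only [Function.comp]
      rw [g2 _ (by omega) (by omega)]
      congr 1
      omega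
    · subst h
      rw [nmEdge_outer k r i hr, ← hS]
      congr 1
      ext w
      simp only [Finset.mem_image, Finset.mem_union, Finset.mem_Icc]
      constructor
      · rintro ⟨v, hv, rfl⟩
        rcases le_or_gt v (k - r) with h1 | h1
        · exact ⟨v, by omega, (g1 v h1).symm⟩
        · exact ⟨v - k * i, by omega, (g3 v (by omega)).symm⟩
      · rintro ⟨j, hj, rfl⟩
        rcases le_or_gt j (k - r) with h1 | h1
        · exact ⟨j, by omega, g1 j h1⟩
        · refine ⟨j + k * i, by omega, ?_⟩
          rw [g3 _ (by omega)]
          congr 2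
          omega

theorem NEmb_mono {t : ℕ} (k r e : ℕ) (c : Finset ℕ → Fin t) (a b : ℕ) (x : Fin t)
    (he : e = 0) : NEmb k r e c a b x := by
  subst he
  refine ⟨id, strictMonoOn_id, ?_, ?_⟩
  · intro v h1 h2
    simp at h2
    omega
  · intro i hi
    omega

/-- Finiteness of the Ramsey number. -/
theorem nm_upper (k t : ℕ) (r : Fin t → ℕ) (ht : 1 ≤ t) (hr : ∀ i, r i ≤ k) (m : ℕ) :
    ∃ M, ∀ e : Fin t → ℕ, ∑ i, e i = m → ∀ (c : Finset ℕ → Fin t) (a : ℕ),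
      ∃ x, NEmb k (r x) (e x) c a (a + M) x := by
  induction m with
  | zero =>
    refine ⟨0, fun e hs c a => ⟨⟨0, ht⟩, NEmb_mono _ _ _ _ _ _ _ ?_⟩⟩
    exact (Finset.sum_eq_zero_iff.mp hs) _ (Finset.mem_univ _)
  | succ m ih =>
    obtain ⟨M, hM⟩ := ih
    refine ⟨(k + 1) * (M + 1), fun e hs c a => ?_⟩
    obtain ⟨x, hx⟩ : ∃ x, c ((Finset.Icc 1 k).image (fun j => a + j * (M + 1))) = x := ⟨_, rfl⟩
    by_cases h0 : e x = 0
    · exact ⟨x, NEmb_mono _ _ _ _ _ _ _ h0⟩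
    · have hsum : ∑ i, Function.update e x (e x - 1) i = m := by
        have h1 := Finset.sum_update_of_mem (Finset.mem_univ x) e (e x - 1)
        have h2 := Finset.add_sum_erase Finset.univ e (Finset.mem_univ x)
        rw [← Finset.erase_eq] at h1
        omega
      obtain ⟨y, hy⟩ := hM _ hsum c (a + (k - r x) * (M + 1))
      by_cases hyx : y = x
      · subst hyx
        rw [Function.update_self] at hy
        have := NEmb_wrap k (r y) (e y - 1) M a (hr y) c y hx hy
        rw [Nat.sub_add_cancel (by omega)] at this
        exact ⟨y, this⟩
      · rw [Function.update_of_ne hyx] at hy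
        refine ⟨y, ?_⟩
        obtain ⟨f, hf, hb, hc⟩ := hy
        refine ⟨f, hf, ?_, hc⟩
        intro v h1 h2
        have := hb v h1 h2
        have h3 : (k - r x) * (M + 1) ≤ k * (M + 1) := Nat.mul_le_mul_right _ (by omega)
        have h4 : (k + 1) * (M + 1) = k * (M + 1) + (M + 1) := by ring
        omega

theorem strictMonoOn_add_le (f : ℕ → ℕ) (n u d : ℕ) (hf : StrictMonoOn f (Set.Icc 1 n))
    (hu : 1 ≤ u) (hd : u + d ≤ n) : f u + d ≤ f (u + d) := by
  induction d with
  | zero => simp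
  | succ d ih =>
    have h1 := ih (by omega)
    have h2 : f (u + d) < f (u + (d + 1)) := hf ⟨by omega, by omega⟩ ⟨by omega, by omega⟩ (by omega)
    omega

/-- The avoiding colorings. -/
theorem nm_lower (k t : ℕ) (r : Fin t → ℕ) (hk : 1 ≤ k) (ht : 1 ≤ t) (hr : ∀ i, r i ≤ k)
    (m : ℕ) : ∀ (e : Fin t → ℕ), (∀ i, 1 ≤ e i) → ∑ i, (e i - 1) = m →
      ∀ a b, b < a + k * (1 + m) →
      ∃ c : Finset ℕ → Fin t, ∀ x, ¬ NEmb k (r x) (e x) c a b x := by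
  induction m with
  | zero =>
    intro e he hs a b hab
    refine ⟨fun _ => ⟨0, ht⟩, ?_⟩
    rintro x ⟨f, hf, hb, -⟩
    have hke : k * 1 ≤ k * e x := Nat.mul_le_mul_left _ (he x)
    have h1 := strictMonoOn_add_le f _ 1 (k - 1) hf le_rfl (by omega)
    have h2 := hb 1 le_rfl (by omega)
    have h3 := hb (1 + (k - 1)) (by omega) (by omega)
    omega
  | succ m ih =>
    intro e he hs a b hab
    obtain ⟨x, -, hx⟩ : ∃ x ∈ Finset.univ, e x - 1 ≠ 0 := by
      by_contra! hcon
      rw [Finset.sum_eq_zero hcon] at hs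
      omega
    obtain ⟨n, hn⟩ : ∃ n, e x = n + 1 := ⟨e x - 1, by omega⟩
    have hrx := hr x
    have hsum : ∑ i, (Function.update e x n i - 1) = m := by
      have h1 := Finset.add_sum_erase Finset.univ (fun i => e i - 1) (Finset.mem_univ x)
      have h2 := Finset.add_sum_erase Finset.univ (fun i => Function.update e x n i - 1)
        (Finset.mem_univ x)
      have h3 : ∑ i ∈ Finset.univ.erase x, (Function.update e x n i - 1) =
          ∑ i ∈ Finset.univ.erase x, (e i - 1) := by
        apply Finset.sum_congr rfl
        intro i hi
        rw [Function.update_of_ne (Finset.ne_of_mem_erase hi)]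
      simp only [Function.update_self] at h2
      omega
    have hmul : k * (1 + (m + 1)) = k * (1 + m) + k := by ring
    have hpos : 0 < k * (1 + m) := by positivity
    obtain ⟨c, hc⟩ := ih (Function.update e x n) (by
      intro i
      by_cases hi : i = x
      · subst hi
        rw [Function.update_self]
        omega
      · rw [Function.update_of_ne hi]
        exact he i) hsum (a + (k - r x)) (b - r x) (by omega)
    refine ⟨fun A => if A ⊆ Finset.Ioc (a + (k - r x)) (b - r x) then c A else x, ?_⟩
    rintro y ⟨f, hf, hb, hcol⟩
    apply hc y
    by_cases hyx : y = x
    · subst hyx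
      rw [Function.update_self]
      rw [hn] at hf hb hcol
      have hke : k * (n + 1) = k * n + k := by ring
      have hrange : ∀ v, 1 ≤ v → v ≤ k * n →
          a + (k - r y) < f (v + (k - r y)) ∧ f (v + (k - r y)) ≤ b - r y := by
        intro v h1 h2
        have h3 := strictMonoOn_add_le f _ v (k - r y) hf h1 (by omega)
        have h4 := strictMonoOn_add_le f _ (v + (k - r y)) (r y) hf (by omega) (by omega)
        have h5 := hb v h1 (by omega)
        have h6 := hb (v + (k - r y) + r y) (by omega) (by omega)
        omega
      refine ⟨fun v => f (v + (k - r y)), ?_, hrange, ?_⟩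
      · intro u hu v hv huv
        rw [Set.mem_Icc] at hu hv
        exact hf ⟨by omega, by omega⟩ ⟨by omega, by omega⟩ (by omega)
      · intro i hi
        have h := hcol i (by omega)
        rw [nmEdge_shift k (r y) n i hi, Finset.image_image] at h
        simp only at h
        rw [if_pos] at h
        · exact h
        · intro w hw
          obtain ⟨v, hv, rfl⟩ := Finset.mem_image.mp hw
          have hv' := Finset.mem_Icc.mp (nmEdge_sub k (r y) n i hrx hi hv)
          exact Finset.mem_Ioc.mpr (hrange v hv'.1 hv'.2)
    · rw [Function.update_of_ne hyx]
      have hsub : ∀ i < e y, (nmEdge k (r y) (e y) i).image f ⊆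
          Finset.Ioc (a + (k - r x)) (b - r x) := by
        intro i hi
        by_contra hcon
        have h := hcol i hi
        simp only at h
        rw [if_neg hcon] at h
        exact hyx h.symm
      refine ⟨f, hf, ?_, ?_⟩
      · intro v h1 h2
        obtain ⟨i, hi, hv⟩ := nmEdge_cover k (r y) (e y) v (hr y) (Finset.mem_Icc.mpr ⟨h1, h2⟩)
        exact Finset.mem_Ioc.mp (hsub i hi (Finset.mem_image_of_mem f hv))
      · intro i hi
        have h := hcol i hi
        simp only at h
        rw [if_pos (hsub i hi)] at h
        exact h

/-- For `k ≥ 1`, positive integers `e_1, …, e_t`, and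
`r_1, …, r_t ∈ {0, …, k}`,
`OR(M_{e_1}^{k,r_1}, …, M_{e_t}^{k,r_t}) ≥ k(1 + Σ_i (e_i - 1))`. -/
theorem ordered_ramsey_nested_matchings_lower (k t : ℕ) (e r : Fin t → ℕ)
    (hk : 1 ≤ k) (ht : 1 ≤ t) (he : ∀ i, 1 ≤ e i) (hr : ∀ i, r i ≤ k) :
    k * (1 + ∑ i, (e i - 1)) ≤ ORnum k (fun i => nestedMatching k (r i) (e i)) := by
  unfold ORnum
  apply le_csInf
  · obtain ⟨M, hM⟩ := nm_upper k t r ht hr (∑ i, e i)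
    refine ⟨M, fun c => ?_⟩
    obtain ⟨x, hx⟩ := hM e rfl c 0
    rw [Nat.zero_add] at hx
    exact ⟨x, contains_of_NEmb k (r x) (e x) M (hr x) c x hx⟩
  · intro N hN
    by_contra! hlt
    obtain ⟨c, hc⟩ := nm_lower k t r hk ht hr _ e he rfl 0 N (by omega)
    obtain ⟨x, hx⟩ := hN c
    exact hc x (NEmb_of_contains k (r x) (e x) N c x hx)
end

section
/- For an integer k ≥ 1, positive integers e_1,...,e_t, and a fixed integer r with 0 ≤ r ≤ k, the ordered Ramsey number satisfies OR(M_{e_1}^{k,r},...,M_{e_t}^{k,r}) = k·(1 + Σ_{i=1}^t (e_i − 1)). -/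
/-- Blow-up of a map on blocks of length `m`. -/
def blowUp (m : ℕ) (h : ℕ → ℕ) (x : ℕ) : ℕ := h (x / m) * m + x % m

lemma blowUp_lt (m : ℕ) (h : ℕ → ℕ) (x y : ℕ) (hxy : x < y)
    (hh : x / m < y / m → h (x / m) < h (y / m)) : blowUp m h x < blowUp m h y := by
  unfold blowUp
  rcases Nat.eq_zero_or_pos m with rfl | hm
  · simpa using hxy
  · have h1 := Nat.div_add_mod x m
    have h2 := Nat.div_add_mod y m
    have h3 := Nat.mod_lt x hm
    rcases (Nat.div_le_div_right (c := m) hxy.le).lt_or_eq with hlt | heq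
    · have h4 := Nat.mul_le_mul_right m (hh hlt)
      rw [Nat.succ_mul] at h4
      omega
    · rw [heq] at h1 ⊢
      omega

lemma blowUp_block (m : ℕ) (h : ℕ → ℕ) (q s : ℕ) (hs : s < m) :
    blowUp m h (q * m + s) = h q * m + s := by
  have h1 : (q * m + s) / m = q := by
    rw [mul_comm, Nat.mul_add_div (by omega), Nat.div_eq_of_lt hs, add_zero]
  have h2 : (q * m + s) % m = s := by
    rw [mul_comm, Nat.mul_add_mod, Nat.mod_eq_of_lt hs]
  unfold blowUp
  rw [h1, h2]

lemma blowUp_bound (m : ℕ) (h : ℕ → ℕ) (E S x : ℕ) (hx : x < E * m)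
    (hh : ∀ q < E, h q < S) : blowUp m h x < S * m := by
  have hm : 0 < m := Nat.pos_of_ne_zero (by rintro rfl; simp at hx)
  have h1 := hh _ ((Nat.div_lt_iff_lt_mul hm).2 hx)
  have h2 := Nat.mod_lt x hm
  have h4 := Nat.mul_le_mul_right m h1
  rw [Nat.succ_mul] at h4
  unfold blowUp
  omega

/-- The `j`-th edge of the nested matching, with `a = k - r`. -/
def nEdge (a r E j : ℕ) : Finset ℕ :=
  Finset.Icc ((E - 1 - j) * a + 1) ((E - j) * a) ∪
    Finset.Icc (E * a + j * r + 1) (E * a + (j + 1) * r)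

lemma nEdge_mem (a r S j : ℕ) (hj : j < S) :
    nEdge a r S j ∈ Finset.powersetCard (a + r) (Finset.Icc 1 ((a + r) * S)) := by
  have h1 : (S - 1 - j + 1) * a ≤ S * a := Nat.mul_le_mul_right a (by omega)
  have h2 : (j + 1) * r ≤ S * r := Nat.mul_le_mul_right r (by omega)
  have h3 : S - j = S - 1 - j + 1 := by omega
  have h4 : (a + r) * S = S * a + S * r := by ring
  rw [Finset.mem_powersetCard]
  unfold nEdge
  rw [h3, h4]
  constructor
  · intro x hx
    simp only [Finset.mem_union, Finset.mem_Icc] at hx ⊢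
    omega
  · rw [Finset.card_union_of_disjoint]
    · simp only [Nat.card_Icc, Nat.succ_mul]
      omega
    · rw [Finset.disjoint_left]
      intro x hx hy
      simp only [Finset.mem_Icc] at hx hy
      omega

lemma image_block (f : ℕ → ℕ) (b b' m : ℕ) (h : ∀ s < m, f (b + s + 1) = b' + s + 1) :
    (Finset.Icc (b + 1) (b + m)).image f = Finset.Icc (b' + 1) (b' + m) := by
  ext y
  simp only [Finset.mem_image, Finset.mem_Icc]
  constructor
  · rintro ⟨x, hx, rfl⟩
    have := h (x - b - 1) (by omega)
    rw [show b + (x - b - 1) + 1 = x by omega] at this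
    omega
  · intro hy
    refine ⟨b + (y - b' - 1) + 1, by omega, ?_⟩
    rw [h _ (by omega)]
    omega

/-- A subfamily of the edges of a nested matching is a nested matching. -/
lemma exists_sub (a r E S : ℕ) (g : ℕ → ℕ) (hg : StrictMono g) (hgS : ∀ j < E, g j < S) :
    ∃ f : ℕ → ℕ, StrictMono f ∧ (∀ v ∈ Finset.Icc 1 ((a + r) * E),
      f v ∈ Finset.Icc 1 ((a + r) * S)) ∧
      ∀ j < E, (nEdge a r E j).image f = nEdge a r S (g j) := by
  set h : ℕ → ℕ := fun q => S - 1 - g (E - 1 - q) with hh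
  have hb : ∀ q < E, h q < S := by
    intro q hq
    have := hgS (E - 1 - q) (by omega)
    simp only [hh]
    omega
  have hmono : ∀ p q, p < q → q < E → h p < h q := by
    intro p q hpq hq
    have h1 := hgS (E - 1 - p) (by omega)
    have h2 : g (E - 1 - q) < g (E - 1 - p) := hg (by omega)
    simp only [hh]
    omega
  set f : ℕ → ℕ := fun v => if v = 0 then 0 else if v ≤ E * a then blowUp a h (v - 1) + 1
    else S * a + blowUp r g (v - E * a - 1) + 1 with hf
  have fL : ∀ v, v < E * a → f (v + 1) = blowUp a h v + 1 := by
    intro v hv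
    simp only [hf]
    rw [if_neg (by omega), if_pos (by omega)]
    simp
  have fR : ∀ v, f (E * a + v + 1) = S * a + blowUp r g v + 1 := by
    intro v
    simp only [hf]
    rw [if_neg (by omega), if_neg (by omega), show E * a + v + 1 - E * a - 1 = v by omega]
  have f0 : f 0 = 0 := by simp [hf]
  have cases : ∀ v, v = 0 ∨ (∃ x, x < E * a ∧ v = x + 1) ∨ ∃ x, v = E * a + x + 1 := by
    intro v
    by_cases h0 : v = 0
    · exact Or.inl h0
    · by_cases h1 : v ≤ E * a
      · exact Or.inr (Or.inl ⟨v - 1, by omega, by omega⟩)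
      · exact Or.inr (Or.inr ⟨v - E * a - 1, by omega⟩)
  refine ⟨f, ?_, ?_, ?_⟩
  · intro u v huv
    rcases cases u with rfl | ⟨x, hx, rfl⟩ | ⟨x, rfl⟩ <;>
      rcases cases v with rfl | ⟨y, hy, rfl⟩ | ⟨y, rfl⟩
    · omega
    · rw [f0, fL _ hy]; omega
    · rw [f0, fR]; omega
    · omega
    · rw [fL _ hx, fL _ hy]
      have := blowUp_lt a h x y (by omega) (fun hq => hmono _ _ hq
        ((Nat.div_lt_iff_lt_mul (Nat.pos_of_ne_zero (by rintro rfl; simp at hy))).2 hy))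
      omega
    · rw [fL _ hx, fR]
      have := blowUp_bound a h E S x hx hb
      omega
    · omega
    · omega
    · rw [fR, fR]
      have := blowUp_lt r g x y (by omega) (fun hq => hg hq)
      omega
  · intro v hv
    have e1 : (a + r) * S = S * a + S * r := by ring
    have e2 : (a + r) * E = E * a + E * r := by ring
    rw [Finset.mem_Icc, e2] at hv
    rw [Finset.mem_Icc, e1]
    rcases cases v with rfl | ⟨y, hy, rfl⟩ | ⟨y, rfl⟩
    · omega
    · rw [fL _ hy]
      have := blowUp_bound a h E S y hy hb
      omega
    · rw [fR]
      have := blowUp_bound r g E S y (by omega) hgS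
      omega
  · intro j hj
    have hgj := hgS j hj
    have h3 : E - j = E - 1 - j + 1 := by omega
    have h4 : S - g j = S - 1 - g j + 1 := by omega
    have h5 : h (E - 1 - j) = S - 1 - g j := by
      simp only [hh]
      rw [show E - 1 - (E - 1 - j) = j by omega]
    unfold nEdge
    rw [Finset.image_union, h3, h4, Nat.succ_mul, Nat.succ_mul, Nat.succ_mul, Nat.succ_mul,
      ← add_assoc, ← add_assoc]
    congr 1
    · apply image_block
      intro s hs
      have h6 : (E - 1 - j + 1) * a ≤ E * a := Nat.mul_le_mul_right a (by omega)
      rw [Nat.succ_mul] at h6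
      rw [fL _ (by omega), blowUp_block _ _ _ _ hs, h5]
    · apply image_block
      intro s hs
      rw [add_assoc (E * a), fR, blowUp_block _ _ _ _ hs]
      omega

lemma upper_bound_s7 (a r t : ℕ) (e : Fin t → ℕ) (he : ∀ i, 1 ≤ e i)
    (c : Finset ℕ → Fin t) :
    ∃ i, (coloredSubgraph (a + r) ((a + r) * (1 + ∑ i, (e i - 1))) c i).Contains
      (nestedMatching (a + r) r (e i)) := by
  classical
  set S := 1 + ∑ i, (e i - 1) with hS
  obtain ⟨i, hi⟩ : ∃ i, e i ≤ ((Finset.range S).filter fun j => c (nEdge a r S j) = i).card := by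
    by_contra! hcon
    have h1 := Finset.card_eq_sum_card_fiberwise (s := Finset.range S) (t := Finset.univ)
      (f := fun j => c (nEdge a r S j)) (fun _ _ => by simp)
    have h2 : ∑ i, ((Finset.range S).filter fun j => c (nEdge a r S j) = i).card
        ≤ ∑ i, (e i - 1) := Finset.sum_le_sum (fun i _ => by have := hcon i; omega)
    rw [Finset.card_range] at h1
    omega
  refine ⟨i, ?_⟩
  set p : ℕ → Prop := fun n => S ≤ n ∨ c (nEdge a r S n) = i with hp
  have hinf : (setOf p).Infinite :=
    (Set.Ici_infinite S).mono (fun n hn => Or.inl hn)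
  have hcount : e i ≤ Nat.count p S := by
    rw [Nat.count_eq_card_filter_range]
    refine hi.trans (Finset.card_le_card ?_)
    intro n hn
    rw [Finset.mem_filter] at hn ⊢
    exact ⟨hn.1, Or.inr hn.2⟩
  have hlt : ∀ j < e i, Nat.nth p j < S := fun j hj =>
    Nat.nth_lt_of_lt_count (lt_of_lt_of_le hj hcount)
  have hcol : ∀ j < e i, c (nEdge a r S (Nat.nth p j)) = i := by
    intro j hj
    rcases Nat.nth_mem_of_infinite hinf j with h | h
    · have := hlt j hj
      omega
    · exact h
  obtain ⟨f, hf, hv, hE⟩ := exists_sub a r (e i) S (Nat.nth p) (Nat.nth_strictMono hinf) hlt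
  refine ⟨f, hf, hv, ?_⟩
  intro A hA
  simp only [nestedMatching, Nat.add_sub_cancel, Finset.mem_image, Finset.mem_range] at hA
  obtain ⟨j, hj, rfl⟩ := hA
  have := hE j hj
  unfold nEdge at this
  rw [this]
  change nEdge a r S (Nat.nth p j) ∈ _
  simp only [coloredSubgraph, Finset.mem_filter]
  exact ⟨nEdge_mem a r S _ (hlt j hj), hcol j hj⟩

lemma lower_bound_s7 (a r t : ℕ) (e : Fin t → ℕ) (ht : 1 ≤ t) (he : ∀ i, 1 ≤ e i) (N : ℕ)
    (hN : N < (a + r) * (1 + ∑ i, (e i - 1))) :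
    ∃ c : Finset ℕ → Fin t, ∀ i, ¬ (coloredSubgraph (a + r) N c i).Contains
      (nestedMatching (a + r) r (e i)) := by
  classical
  set d : ℕ → ℕ := fun j => if h : j < t then e ⟨j, h⟩ - 1 else 0 with hd
  set P : ℕ → ℕ := fun n => ∑ j ∈ Finset.range n, d j with hP
  have hPt : P t = ∑ i, (e i - 1) := by
    simp only [hP]
    rw [Finset.sum_range]
    exact Finset.sum_congr rfl (fun i _ => by simp [hd])
  have hPs : ∀ i : Fin t, P (i + 1) = P i + (e i - 1) := by
    intro i
    simp only [hP]
    rw [Finset.sum_range_succ]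
    simp [hd]
  set hit : Finset ℕ → ℕ → Prop := fun A n => ∃ v ∈ A, v ≤ a * P n ∨ N < v + r * P n with hhit
  have key : ∀ A : Finset ℕ, ∃ i : Fin t, A ∈ Finset.powersetCard (a + r) (Finset.Icc 1 N) →
      hit A (i + 1) ∧ ¬ hit A i := by
    intro A
    by_cases hA : A ∈ Finset.powersetCard (a + r) (Finset.Icc 1 N)
    swap
    · exact ⟨⟨0, ht⟩, fun h => absurd h hA⟩
    rw [Finset.mem_powersetCard] at hA
    have h0 : ¬ hit A 0 := by
      rintro ⟨v, hv, h⟩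
      have := Finset.mem_Icc.1 (hA.1 hv)
      simp [hP] at h
      omega
    have hT : hit A t := by
      by_contra hcon
      simp only [hhit] at hcon
      push Not at hcon
      have hsub : A ⊆ Finset.Icc (a * P t + 1) (N - r * P t) := by
        intro v hv
        have := hcon v hv
        rw [Finset.mem_Icc]
        omega
      have hc := Finset.card_le_card hsub
      rw [Nat.card_Icc, hA.2] at hc
      rw [← hPt] at hN
      have : (a + r) * (1 + P t) = a + r + a * P t + r * P t := by ring
      have hpos : 0 < a + r := by
        rcases Nat.eq_zero_or_pos (a + r) with h | h
        · rw [h] at hN; simp at hN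
        · exact h
      omega
    have hex : ∃ n, hit A n := ⟨t, hT⟩
    have hf := Nat.find_spec hex
    have hle : Nat.find hex ≤ t := Nat.find_min' hex hT
    have hne : Nat.find hex ≠ 0 := fun h => h0 (h ▸ hf)
    refine ⟨⟨Nat.find hex - 1, by omega⟩, fun _ => ⟨?_, Nat.find_min hex (by simp; omega)⟩⟩
    simp only
    rwa [Nat.sub_add_cancel (by omega)]
  choose c hc using key
  refine ⟨c, ?_⟩
  rintro i ⟨f, hf, hv, hE⟩
  have hei := he i
  have edge : ∀ j < e i, (nEdge a r (e i) j).image f ∈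
      Finset.powersetCard (a + r) (Finset.Icc 1 N) ∧ c ((nEdge a r (e i) j).image f) = i := by
    intro j hj
    have := hE (nEdge a r (e i) j) (by
      simp only [nestedMatching, Nat.add_sub_cancel, Finset.mem_image, Finset.mem_range]
      exact ⟨j, hj, rfl⟩)
    simpa only [coloredSubgraph, Finset.mem_filter] using this
  obtain ⟨m0, c0⟩ := edge 0 (by omega)
  obtain ⟨m1, c1⟩ := edge (e i - 1) (by omega)
  have k0 := (hc _ m0).1
  have k1 := (hc _ m1).2
  rw [c0] at k0
  rw [c1] at k1
  simp only [hhit] at k1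
  push Not at k1
  obtain ⟨v, hvm, hvv⟩ := k0
  have hvN := Finset.mem_Icc.1 ((Finset.mem_powersetCard.1 m0).1 hvm)
  obtain ⟨x, hx, rfl⟩ := Finset.mem_image.1 hvm
  obtain ⟨E, hEE⟩ : ∃ E, e i = E + 1 := ⟨e i - 1, by omega⟩
  rw [hPs, hEE] at hvv
  rw [hEE] at hx k1
  simp only [nEdge, Nat.add_sub_cancel, Nat.sub_zero, Finset.mem_union, Finset.mem_Icc,
    zero_mul, zero_add, one_mul, add_zero, Nat.succ_mul] at hx
  rw [Nat.add_sub_cancel, Nat.mul_add, Nat.mul_add] at hvv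
  rw [mul_comm a E, mul_comm r E] at hvv
  rcases hvv with h | h
  · rcases Nat.eq_zero_or_pos a with ha | ha
    · subst ha
      simp at h
      omega
    · have h1 := (k1 (f 1) (Finset.mem_image_of_mem f (by
        simp only [nEdge, Finset.mem_union, Finset.mem_Icc]
        left
        simp
        omega))).1
      have h2 := hf.add_le_nat (x - 1) 1
      rw [show x - 1 + 1 = x by omega] at h2
      omega
  · rcases Nat.eq_zero_or_pos r with ha | ha
    · subst ha
      simp at h
      omega
    · have h1 := (k1 (f (E * a + a + (E * r + r))) (Finset.mem_image_of_mem f (by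
        simp only [nEdge, Finset.mem_union, Finset.mem_Icc]
        right
        simp only [Nat.add_sub_cancel, Nat.succ_mul]
        omega))).2
      have h2 := hf.add_le_nat (E * a + a + (E * r + r) - x) x
      rw [show E * a + a + (E * r + r) - x + x = E * a + a + (E * r + r) by omega] at h2
      omega

/-- For `k ≥ 1`, positive integers `e_1, …, e_t`, and a fixed
`0 ≤ r ≤ k`, `OR(M_{e_1}^{k,r}, …, M_{e_t}^{k,r}) = k(1 + Σ_i (e_i - 1))`. -/
theorem ordered_ramsey_nested_matchings (k r t : ℕ) (e : Fin t → ℕ)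
    (hk : 1 ≤ k) (ht : 1 ≤ t) (he : ∀ i, 1 ≤ e i) (hr : r ≤ k) :
    ORnum k (fun i => nestedMatching k r (e i)) = k * (1 + ∑ i, (e i - 1)) := by
  obtain ⟨a, rfl⟩ : ∃ a, k = a + r := ⟨k - r, by omega⟩
  unfold ORnum
  apply le_antisymm
  · exact Nat.sInf_le (fun c => upper_bound_s7 a r t e he c)
  · refine le_csInf ⟨_, fun c => upper_bound_s7 a r t e he c⟩ ?_
    intro N hN
    by_contra! hlt
    obtain ⟨c, hc⟩ := lower_bound_s7 a r t e ht he N hlt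
    obtain ⟨i, hi⟩ := hN c
    exact hc i hi
end
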